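/- arXiv:2307.05859 — 2 statements merged into one kernel-verified Lean document; each statement's English description precedes it below -/
import Mathlib

section
/- Assume k is algebraically closed. Let Δ be trinomial data over k. If k[Δ] is a smooth k-algebra (equivalently, Spec(k[Δ]) is a smooth variety over k), then k[Δ] is isomorphic as a k-algebra to a polynomial ring over k. -/
open MvPolynomial

/-- Trinomial data `Δ` over a field `k`: an integer `n ≥ 2` with a partition
`n = n_0 + ⋯ + n_r` (`r ≥ 1`, `n_i ≥ 1`), exponent vectors `β_i ∈ ℤ₊^{n_i}` with
`gcd(d_i, d_j) = 1` for `i ≠ j` where `d_i = gcd(β_{i1}, …, β_{i n_i})`, and distinct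
scalars `λ_2, …, λ_r ∈ k^*`. -/
structure TrinomialData (k : Type*) [Field k] where
  /-- the number `r` of parts minus one -/
  r : ℕ
  one_le_r : 1 ≤ r
  /-- the partition `n = n_0 + ⋯ + n_r` -/
  n : Fin (r + 1) → ℕ
  one_le_n : ∀ i, 1 ≤ n i
  two_le_total : 2 ≤ ∑ i, n i
  /-- the exponent vectors `β_i` -/
  β : (i : Fin (r + 1)) → Fin (n i) → ℕ
  β_pos : ∀ i j, 0 < β i j
  gcd_coprime : ∀ i j, i ≠ j →
    Nat.Coprime (Finset.univ.gcd (β i)) (Finset.univ.gcd (β j))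
  /-- the scalars `λ_i` (only the values for `2 ≤ i` are relevant) -/
  lam : Fin (r + 1) → k
  lam_ne_zero : ∀ i : Fin (r + 1), 2 ≤ (i : ℕ) → lam i ≠ 0
  lam_injOn : ∀ i j : Fin (r + 1), 2 ≤ (i : ℕ) → 2 ≤ (j : ℕ) → lam i = lam j → i = j

variable {k : Type*} [Field k]

/-- The variables `t_{ij}`, `0 ≤ i ≤ r`, `1 ≤ j ≤ n_i`. -/
def TrinomialData.Vars (Δ : TrinomialData k) : Type :=
  Σ i : Fin (Δ.r + 1), Fin (Δ.n i)

/-- The monomial `T_i^{β_i} = t_{i1}^{β_{i1}} ⋯ t_{i n_i}^{β_{i n_i}}`. -/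
noncomputable def TrinomialData.mon (Δ : TrinomialData k) (i : Fin (Δ.r + 1)) :
    MvPolynomial Δ.Vars k :=
  ∏ j : Fin (Δ.n i), (X (⟨i, j⟩ : Δ.Vars)) ^ Δ.β i j

/-- The ideal of trinomial relations `T_0^{β_0} + λ_i T_1^{β_1} + T_i^{β_i}`, `2 ≤ i ≤ r`. -/
noncomputable def TrinomialData.relIdeal (Δ : TrinomialData k) :
    Ideal (MvPolynomial Δ.Vars k) :=
  Ideal.span {p | ∃ i : Fin (Δ.r + 1), 2 ≤ (i : ℕ) ∧
    p = Δ.mon 0 + C (Δ.lam i) * Δ.mon 1 + Δ.mon i}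

/-- The ring `k[Δ]` associated to trinomial data `Δ`. -/
noncomputable abbrev TrinomialData.Ring (Δ : TrinomialData k) : Type _ :=
  MvPolynomial Δ.Vars k ⧸ Δ.relIdeal

/-- `Δ` is reduced if either `r = 1` and `β_{01} = β_{11} = 1`, or `r ≥ 2` and
`|β_i| ≥ 2` for each `i`. -/
def TrinomialData.Reduced (Δ : TrinomialData k) : Prop :=
  (Δ.r = 1 ∧ Δ.β 0 ⟨0, Δ.one_le_n 0⟩ = 1 ∧ Δ.β 1 ⟨0, Δ.one_le_n 1⟩ = 1) ∨
  (2 ≤ Δ.r ∧ ∀ i, 2 ≤ ∑ j, Δ.β i j)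

theorem smooth_key {k P : Type*} [Field k] [CommRing P] [Algebra k P] (I m : Ideal P)
    (hIm : I ≤ m) (hs : Algebra.FormallySmooth k (P ⧸ I)) (x : P) (hxI : x ∈ I)
    (hx : x ∈ m * m) : x ∈ m * I := by
  have hle : m * I ≤ I := Ideal.mul_le_right
  let g : (P ⧸ (m * I)) →ₐ[k] (P ⧸ I) := Ideal.Quotient.factorₐ k hle
  have hgmk : ∀ p, g (Ideal.Quotient.mk _ p) = Ideal.Quotient.mk _ p := fun p => rfl
  have hg : Function.Surjective g := Ideal.Quotient.factor_surjective hle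
  have hnil : IsNilpotent (RingHom.ker (g : (P ⧸ (m * I)) →+* (P ⧸ I))) := by
    refine ⟨2, ?_⟩
    rw [pow_two, Ideal.zero_eq_bot, eq_bot_iff, Ideal.mul_le]
    intro a ha b hb
    obtain ⟨a, rfl⟩ := Ideal.Quotient.mk_surjective a
    obtain ⟨b, rfl⟩ := Ideal.Quotient.mk_surjective b
    have ha' : a ∈ I := Ideal.Quotient.eq_zero_iff_mem.1 ha
    have hb' : b ∈ I := Ideal.Quotient.eq_zero_iff_mem.1 hb
    rw [Ideal.mem_bot, ← map_mul, Ideal.Quotient.eq_zero_iff_mem]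
    exact Ideal.mul_mem_mul (hIm ha') hb'
  let s := Algebra.FormallySmooth.liftOfSurjective (AlgHom.id k (P ⧸ I)) g hg hnil
  have hsg : ∀ y, g (s y) = y := fun y =>
    Algebra.FormallySmooth.liftOfSurjective_apply (AlgHom.id k (P ⧸ I)) g hg hnil y
  have hq : ∀ p : P, ∃ q : P, s (Ideal.Quotient.mk _ p) = Ideal.Quotient.mk _ q ∧ q - p ∈ I := by
    intro p
    obtain ⟨q, hq⟩ := Ideal.Quotient.mk_surjective (s (Ideal.Quotient.mk _ p))
    refine ⟨q, hq.symm, ?_⟩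
    rw [← Ideal.Quotient.eq, ← hgmk, hq, hsg]
  have key : s (Ideal.Quotient.mk _ x) = Ideal.Quotient.mk _ x := by
    refine Submodule.mul_induction_on hx ?_ ?_
    · intro a ha b hb
      obtain ⟨qa, h1, h2⟩ := hq a
      obtain ⟨qb, h3, h4⟩ := hq b
      rw [map_mul, map_mul, h1, h3, ← map_mul, Ideal.Quotient.eq]
      have hqa : qa ∈ m := by
        have := m.add_mem (hIm h2) ha
        simpa using this
      have : qa * qb - a * b = qa * (qb - b) + b * (qa - a) := by ring
      rw [this]
      exact Ideal.add_mem _ (Ideal.mul_mem_mul hqa h4) (Ideal.mul_mem_mul hb h2)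
    · intro a b ha hb
      rw [map_add, map_add, ha, hb, map_add]
  rw [Ideal.Quotient.eq_zero_iff_mem.2 hxI, map_zero] at key
  exact Ideal.Quotient.eq_zero_iff_mem.1 key.symm

namespace TrinomialData

def vk (Δ : TrinomialData k) (i : Fin (Δ.r + 1)) (j : Fin (Δ.n i)) : Δ.Vars :=
  Sigma.mk i j

def fs (Δ : TrinomialData k) (v : Δ.Vars) : Fin (Δ.r + 1) := Sigma.fst v

theorem fs_vk (Δ : TrinomialData k) (i : Fin (Δ.r + 1)) (j : Fin (Δ.n i)) :
    Δ.fs (Δ.vk i j) = i := rfl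

theorem vk_inj (Δ : TrinomialData k) (i : Fin (Δ.r + 1)) (j l : Fin (Δ.n i))
    (h : Δ.vk i j = Δ.vk i l) : j = l := by
  unfold vk at h
  cases h
  rfl

theorem exists_vk (Δ : TrinomialData k) (v : Δ.Vars) : ∃ i j, v = Δ.vk i j :=
  ⟨Sigma.fst v, Sigma.snd v, rfl⟩

theorem mon_def (Δ : TrinomialData k) (i : Fin (Δ.r + 1)) :
    Δ.mon i = ∏ j : Fin (Δ.n i), (X (Δ.vk i j)) ^ Δ.β i j := rfl

noncomputable def p1 (Δ : TrinomialData k) (i : Fin (Δ.r + 1)) : k :=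
  if (i : ℕ) = 0 then 1 else if (i : ℕ) = 1 then 0 else -1

noncomputable def p2 (Δ : TrinomialData k) (i : Fin (Δ.r + 1)) : k :=
  if (i : ℕ) = 0 then 0 else if (i : ℕ) = 1 then 1 else - Δ.lam i

theorem val_one (Δ : TrinomialData k) : ((1 : Fin (Δ.r + 1)) : ℕ) = 1 := by
  have := Δ.one_le_r
  rw [Fin.val_one', Nat.mod_eq_of_lt (by omega)]

theorem det_ne (Δ : TrinomialData k) (i j : Fin (Δ.r + 1)) (h : i ≠ j) :
    Δ.p1 i * Δ.p2 j - Δ.p1 j * Δ.p2 i ≠ 0 := by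
  have hv : (i : ℕ) ≠ j := fun h' => h (Fin.ext h')
  have hl := Δ.lam_ne_zero
  have hinj := Δ.lam_injOn i j
  unfold p1 p2
  rcases (by omega : (i : ℕ) = 0 ∨ (i : ℕ) = 1 ∨ 2 ≤ (i : ℕ)) with hi | hi | hi <;>
  rcases (by omega : (j : ℕ) = 0 ∨ (j : ℕ) = 1 ∨ 2 ≤ (j : ℕ)) with hj | hj | hj
  · omega
  · simp [hi, hj]
  · simp [hi, show (j : ℕ) ≠ 0 by omega, show (j : ℕ) ≠ 1 by omega, hl j hj]
  · simp [hi, hj]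
  · omega
  · simp [hi, show (j : ℕ) ≠ 0 by omega, show (j : ℕ) ≠ 1 by omega]
  · simp [hj, show (i : ℕ) ≠ 0 by omega, show (i : ℕ) ≠ 1 by omega, hl i hi]
  · simp [hj, show (i : ℕ) ≠ 0 by omega, show (i : ℕ) ≠ 1 by omega]
  · simp only [show (i : ℕ) ≠ 0 by omega, show (i : ℕ) ≠ 1 by omega,
      show (j : ℕ) ≠ 0 by omega, show (j : ℕ) ≠ 1 by omega, if_false]
    intro h0
    refine h (hinj hi hj ?_)
    linear_combination -h0

/-- relation `T_i = p_i (T_0, T_1)` modulo the ideal. -/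
theorem rel_mem (Δ : TrinomialData k) (i : Fin (Δ.r + 1)) :
    Δ.mon i - (C (Δ.p1 i) * Δ.mon 0 + C (Δ.p2 i) * Δ.mon 1) ∈ Δ.relIdeal := by
  rcases (by omega : (i : ℕ) = 0 ∨ (i : ℕ) = 1 ∨ 2 ≤ (i : ℕ)) with hi | hi | hi
  · have : i = 0 := Fin.ext hi
    subst this
    simp [p1, p2]
  · have : i = 1 := Fin.ext (hi.trans Δ.val_one.symm)
    subst this
    simp only [p1, p2, hi, one_ne_zero, if_false, if_true]
    simp
  · have h1 : (i : ℕ) ≠ 0 := by omega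
    have h2 : (i : ℕ) ≠ 1 := by omega
    simp only [p1, p2, h1, h2, if_false]
    refine Ideal.subset_span ⟨i, hi, ?_⟩
    simp only [map_neg, map_one]
    ring

noncomputable def E (Δ : TrinomialData k) (i : Fin (Δ.r + 1)) : Δ.Vars →₀ ℕ :=
  ∑ j : Fin (Δ.n i), Finsupp.single (Δ.vk i j) (Δ.β i j)

theorem mon_eq (Δ : TrinomialData k) (i : Fin (Δ.r + 1)) :
    Δ.mon i = monomial (Δ.E i) 1 := by
  rw [mon_def]
  unfold E
  rw [monomial_sum_one]
  exact Finset.prod_congr rfl fun j _ => X_pow_eq_monomial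

theorem E_same (Δ : TrinomialData k) (i : Fin (Δ.r + 1)) (j : Fin (Δ.n i)) :
    Δ.E i (Δ.vk i j) = Δ.β i j := by
  classical
  unfold E
  rw [Finsupp.finsetSum_apply, Finset.sum_eq_single j]
  · exact Finsupp.single_eq_same
  · intro b _ hb
    refine Finsupp.single_eq_of_ne ?_
    intro h
    first
    | exact hb (Δ.vk_inj _ _ _ h)
    | exact hb (Δ.vk_inj _ _ _ h.symm)
  · simp

theorem E_other (Δ : TrinomialData k) (i : Fin (Δ.r + 1)) (v : Δ.Vars) (h : Δ.fs v ≠ i) :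
    Δ.E i v = 0 := by
  classical
  unfold E
  rw [Finsupp.finsetSum_apply]
  refine Finset.sum_eq_zero fun j _ => Finsupp.single_eq_of_ne ?_
  rintro rfl
  exact h rfl

noncomputable def mm (Δ : TrinomialData k) : Ideal (MvPolynomial Δ.Vars k) := Ideal.span (Set.range X)

theorem coeff_aux (Δ : TrinomialData k) (a j : Fin (Δ.r + 1)) (v : Δ.Vars)
    (p : MvPolynomial Δ.Vars k) : coeff (Δ.E j) (p * (X v * Δ.mon a)) = 0 := by
  classical
  rw [mon_eq, X, monomial_mul, coeff_mul_monomial', if_neg]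
  intro h
  by_cases haj : a = j
  · subst haj
    have := h v
    simp at this
  · have := h (Δ.vk a ⟨0, Δ.one_le_n a⟩)
    rw [E_other Δ j (Δ.vk a _) haj, Finsupp.add_apply, E_same] at this
    have := Δ.β_pos a ⟨0, Δ.one_le_n a⟩
    omega

theorem coeff_mI (Δ : TrinomialData k) (j : Fin (Δ.r + 1))
    (x : MvPolynomial Δ.Vars k) (hx : x ∈ Δ.mm * Δ.relIdeal) : coeff (Δ.E j) x = 0 := by
  have : ∀ p, coeff (Δ.E j) (p * x) = 0 := by
    unfold mm relIdeal at hx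
    rw [Ideal.span_mul_span'] at hx
    induction hx using Submodule.span_induction with
    | mem x hx =>
      intro p
      obtain ⟨_, ⟨v, rfl⟩, _, ⟨i, hi, rfl⟩, rfl⟩ := Set.mem_mul.1 hx
      have : p * (X v * (Δ.mon 0 + C (Δ.lam i) * Δ.mon 1 + Δ.mon i)) =
        p * (X v * Δ.mon 0) + (p * C (Δ.lam i)) * (X v * Δ.mon 1) + p * (X v * Δ.mon i) := by
        ring
      rw [this, coeff_add, coeff_add, coeff_aux, coeff_aux, coeff_aux]
      simp
    | zero => simp
    | add x y _ _ hx hy => intro p; rw [mul_add, coeff_add, hx, hy, add_zero]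
    | smul a x _ hx => intro p; rw [smul_eq_mul, ← mul_assoc]; exact hx _
  simpa using this 1

/-- the index `i` is linear -/
def Lin (Δ : TrinomialData k) (i : Fin (Δ.r + 1)) : Prop := ∀ j, Δ.β i j = 1 ∧ ∀ j', j' = j

theorem mon_mem (Δ : TrinomialData k) (i : Fin (Δ.r + 1)) : Δ.mon i ∈ Δ.mm := by
  refine Ideal.mem_of_dvd _ (a := X (Δ.vk i ⟨0, Δ.one_le_n i⟩)) ?_ (Ideal.subset_span ⟨_, rfl⟩)
  exact (dvd_pow_self _ (Δ.β_pos _ _).ne').trans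
    (Finset.dvd_prod_of_mem (fun j => (X (Δ.vk i j) : MvPolynomial Δ.Vars k) ^ Δ.β i j) (Finset.mem_univ _))

theorem mon_mem_sq (Δ : TrinomialData k) (i : Fin (Δ.r + 1)) (h : ¬ Δ.Lin i) :
    Δ.mon i ∈ Δ.mm * Δ.mm := by
  classical
  unfold Lin at h
  push Not at h
  obtain ⟨j, h⟩ := h
  by_cases hj : Δ.β i j = 1
  · obtain ⟨j', hne⟩ := h hj
    have : Δ.mon i = (X (Δ.vk i j)) ^ Δ.β i j *
        ∏ l ∈ Finset.univ.erase j, (X (Δ.vk i l)) ^ Δ.β i l :=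
      (Finset.mul_prod_erase _ _ (Finset.mem_univ j)).symm
    rw [this]
    refine Ideal.mul_mem_mul ?_ ?_
    · exact Ideal.pow_mem_of_mem Δ.mm (Ideal.subset_span (Set.mem_range_self _)) _ (Δ.β_pos _ _)
    · refine Ideal.mem_of_dvd _ (a := (X (Δ.vk i j')) ^ Δ.β i j') ?_ ?_
      · exact Finset.dvd_prod_of_mem (fun j => (X (Δ.vk i j) : MvPolynomial Δ.Vars k) ^ Δ.β i j)
          (Finset.mem_erase.2 ⟨hne, Finset.mem_univ _⟩)
      · exact Ideal.pow_mem_of_mem Δ.mm (Ideal.subset_span (Set.mem_range_self _)) _ (Δ.β_pos _ _)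
  · have h2 : 2 ≤ Δ.β i j := by have := Δ.β_pos i j; omega
    refine Ideal.mem_of_dvd _ (a := (X (Δ.vk i j)) ^ 2) ?_ ?_
    · exact (pow_dvd_pow _ h2).trans
        (Finset.dvd_prod_of_mem (fun j => (X (Δ.vk i j) : MvPolynomial Δ.Vars k) ^ Δ.β i j) (Finset.mem_univ j))
    · rw [pow_two]
      exact Ideal.mul_mem_mul (Ideal.subset_span ⟨_, rfl⟩) (Ideal.subset_span ⟨_, rfl⟩)

theorem rel_le (Δ : TrinomialData k) : Δ.relIdeal ≤ Δ.mm := by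
  refine Ideal.span_le.2 ?_
  rintro _ ⟨i, hi, rfl⟩
  exact Ideal.add_mem _ (Ideal.add_mem _ (mon_mem _ _) (Ideal.mul_mem_left _ _ (mon_mem _ _)))
    (mon_mem _ _)

theorem E_ne (Δ : TrinomialData k) (a b : Fin (Δ.r + 1)) (h : a ≠ b) : Δ.E a ≠ Δ.E b := by
  intro he
  have h1 := E_same Δ a ⟨0, Δ.one_le_n a⟩
  rw [he, E_other Δ b (Δ.vk a _) h] at h1
  have := Δ.β_pos a ⟨0, Δ.one_le_n a⟩
  omega

theorem no_three (Δ : TrinomialData k) (hs : Algebra.FormallySmooth k Δ.Ring)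
    (a b c : Fin (Δ.r + 1)) (ha : ¬ Δ.Lin a) (hb : ¬ Δ.Lin b) (hc : ¬ Δ.Lin c)
    (hab : a ≠ b) (hac : a ≠ c) (hbc : b ≠ c) : False := by
  classical
  set wa := Δ.p1 b * Δ.p2 c - Δ.p1 c * Δ.p2 b with hwa
  set wb := Δ.p1 c * Δ.p2 a - Δ.p1 a * Δ.p2 c with hwb
  set wc := Δ.p1 a * Δ.p2 b - Δ.p1 b * Δ.p2 a with hwc
  have hx2 : C wa * Δ.mon a + C wb * Δ.mon b + C wc * Δ.mon c ∈ Δ.mm * Δ.mm :=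
    Ideal.add_mem _ (Ideal.add_mem _ (Ideal.mul_mem_left _ _ (mon_mem_sq _ _ ha))
      (Ideal.mul_mem_left _ _ (mon_mem_sq _ _ hb))) (Ideal.mul_mem_left _ _ (mon_mem_sq _ _ hc))
  have hxI : C wa * Δ.mon a + C wb * Δ.mon b + C wc * Δ.mon c ∈ Δ.relIdeal := by
    have := Ideal.add_mem _ (Ideal.add_mem _ (Ideal.mul_mem_left _ (C wa) (Δ.rel_mem a))
      (Ideal.mul_mem_left _ (C wb) (Δ.rel_mem b))) (Ideal.mul_mem_left _ (C wc) (Δ.rel_mem c))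
    convert this using 1
    simp only [hwa, hwb, hwc, map_sub, map_mul]
    ring
  have h := smooth_key _ _ Δ.rel_le hs _ hxI hx2
  have h' := Δ.coeff_mI a _ h
  simp only [mon_eq, coeff_add, coeff_C_mul, coeff_monomial, if_true, (Δ.E_ne a b hab).symm,
    (Δ.E_ne a c hac).symm, if_false, mul_zero, add_zero, mul_one] at h'
  exact Δ.det_ne b c hbc h'

theorem exists_pair (Δ : TrinomialData k) (hs : Algebra.FormallySmooth k Δ.Ring) :
    ∃ a b : Fin (Δ.r + 1), a ≠ b ∧ ∀ c, c ≠ a → c ≠ b → Δ.Lin c := by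
  have h01 : (0 : Fin (Δ.r + 1)) ≠ 1 := by
    intro h
    have := congrArg Fin.val h
    rw [val_one] at this
    simp at this
  by_cases h1 : ∃ a, ¬ Δ.Lin a
  · obtain ⟨a, ha⟩ := h1
    by_cases h2 : ∃ b, a ≠ b ∧ ¬ Δ.Lin b
    · obtain ⟨b, hab, hb⟩ := h2
      refine ⟨a, b, hab, fun c hca hcb => ?_⟩
      by_contra hc
      exact Δ.no_three hs a b c ha hb hc hab hca.symm hcb.symm
    · push Not at h2
      by_cases h : a = 0
      · exact ⟨a, 1, h ▸ h01, fun c hc _ => h2 c hc.symm⟩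
      · exact ⟨a, 0, h, fun c hc _ => h2 c hc.symm⟩
  · push Not at h1
    exact ⟨0, 1, h01, fun c _ _ => h1 c⟩

theorem mon_lin (Δ : TrinomialData k) (i : Fin (Δ.r + 1)) (h : Δ.Lin i) (j : Fin (Δ.n i)) :
    Δ.mon i = X (Δ.vk i j) := by
  rw [mon_def]
  rw [Finset.prod_eq_single j]
  · rw [(h j).1, pow_one]
  · intro b _ hb
    exact absurd ((h j).2 b) hb
  · simp

theorem poly_of_pair (Δ : TrinomialData k) (a b : Fin (Δ.r + 1)) (hab : a ≠ b)
    (hL : ∀ c, c ≠ a → c ≠ b → Δ.Lin c) :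
    Nonempty (Δ.Ring ≃ₐ[k] MvPolynomial {v : Δ.Vars // Δ.fs v = a ∨ Δ.fs v = b} k) := by
  classical
  have hD := Δ.det_ne a b hab
  set D := Δ.p1 a * Δ.p2 b - Δ.p1 b * Δ.p2 a with hDdef
  let u : Fin (Δ.r + 1) → k := fun i => (Δ.p1 i * Δ.p2 b - Δ.p1 b * Δ.p2 i) / D
  let w : Fin (Δ.r + 1) → k := fun i => (Δ.p1 a * Δ.p2 i - Δ.p1 i * Δ.p2 a) / D
  have hu1 : ∀ i, u i * Δ.p1 a + w i * Δ.p1 b = Δ.p1 i := by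
    intro i; simp only [u, w]; field_simp; rw [hDdef]; ring
  have hu2 : ∀ i, u i * Δ.p2 a + w i * Δ.p2 b = Δ.p2 i := by
    intro i; simp only [u, w]; field_simp; rw [hDdef]; ring
  have hua : u a = 1 := div_self hD
  have hub : u b = 0 := by simp [u]
  have hwa : w a = 0 := by simp [w]
  have hwb : w b = 1 := div_self hD
  let Ta : MvPolynomial {v : Δ.Vars // Δ.fs v = a ∨ Δ.fs v = b} k := ∏ j : Fin (Δ.n a), X ⟨Δ.vk a j, Or.inl rfl⟩ ^ Δ.β a j
  let Tb : MvPolynomial {v : Δ.Vars // Δ.fs v = a ∨ Δ.fs v = b} k := ∏ j : Fin (Δ.n b), X ⟨Δ.vk b j, Or.inr rfl⟩ ^ Δ.β b j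
  let φ : MvPolynomial Δ.Vars k →ₐ[k] MvPolynomial {v : Δ.Vars // Δ.fs v = a ∨ Δ.fs v = b} k := aeval fun v =>
    if h : Δ.fs v = a ∨ Δ.fs v = b then X ⟨v, h⟩ else C (u (Δ.fs v)) * Ta + C (w (Δ.fs v)) * Tb
  have hφX : ∀ (v : Δ.Vars) (h : Δ.fs v = a ∨ Δ.fs v = b), φ (X v) = X ⟨v, h⟩ := by
    intro v h
    simp only [φ, aeval_X, dif_pos h]
  have hφ : ∀ i, φ (Δ.mon i) = C (u i) * Ta + C (w i) * Tb := by
    intro i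
    by_cases hia : i = a
    · subst hia
      rw [hua, hwa, map_one, map_zero, one_mul, zero_mul, add_zero]
      simp only [mon_def, map_prod, map_pow, Ta]
      exact Finset.prod_congr rfl fun j _ => by rw [hφX (Δ.vk i j) (Or.inl rfl)]
    by_cases hib : i = b
    · subst hib
      rw [hub, hwb, map_one, map_zero, one_mul, zero_mul, zero_add]
      simp only [mon_def, map_prod, map_pow, Tb]
      exact Finset.prod_congr rfl fun j _ => by rw [hφX (Δ.vk i j) (Or.inr rfl)]
    have hn : ¬ (i = a ∨ i = b) := by tauto
    rw [mon_lin Δ i (hL i hia hib) ⟨0, Δ.one_le_n i⟩]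
    simp only [φ, aeval_X]
    rw [dif_neg (by rwa [fs_vk]), fs_vk]
  have hker : ∀ x ∈ Δ.relIdeal, φ x = 0 := by
    intro x hx
    have : Δ.relIdeal ≤ RingHom.ker φ := by
      refine Ideal.span_le.2 ?_
      rintro _ ⟨i, hi, rfl⟩
      have h1 : (i : ℕ) ≠ 0 := by omega
      have h2 : (i : ℕ) ≠ 1 := by omega
      have e1 : Δ.p1 0 + Δ.lam i * Δ.p1 1 + Δ.p1 i = 0 := by
        simp only [p1, h1, h2, val_one, one_ne_zero, if_false, if_true]
        simp
      have e2 : Δ.p2 0 + Δ.lam i * Δ.p2 1 + Δ.p2 i = 0 := by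
        simp only [p2, h1, h2, val_one, one_ne_zero, if_false, if_true]
        simp
      have hu : u 0 + Δ.lam i * u 1 + u i = 0 := by
        simp only [u]; field_simp
        linear_combination Δ.p2 b * e1 - Δ.p1 b * e2
      have hw : w 0 + Δ.lam i * w 1 + w i = 0 := by
        simp only [w]; field_simp
        linear_combination Δ.p1 a * e2 - Δ.p2 a * e1
      rw [SetLike.mem_coe, RingHom.mem_ker]
      have hC : φ (C (Δ.lam i)) = C (Δ.lam i) := φ.commutes _
      rw [map_add, map_add, map_mul, hφ, hφ, hφ, hC]
      have hu' := congrArg (C (σ := {v : Δ.Vars // Δ.fs v = a ∨ Δ.fs v = b})) hu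
      have hw' := congrArg (C (σ := {v : Δ.Vars // Δ.fs v = a ∨ Δ.fs v = b})) hw
      simp only [map_add, map_mul, map_zero] at hu' hw'
      linear_combination Ta * hu' + Tb * hw'
    exact this hx
  let F : Δ.Ring →ₐ[k] MvPolynomial {v : Δ.Vars // Δ.fs v = a ∨ Δ.fs v = b} k := Ideal.Quotient.liftₐ Δ.relIdeal φ hker
  have hFmk : ∀ x, F (Ideal.Quotient.mkₐ k Δ.relIdeal x) = φ x := fun x => rfl
  let G : MvPolynomial {v : Δ.Vars // Δ.fs v = a ∨ Δ.fs v = b} k →ₐ[k] Δ.Ring := aeval fun v => Ideal.Quotient.mkₐ k Δ.relIdeal (X v.1)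
  have hGX : ∀ v, G (X v) = Ideal.Quotient.mkₐ k Δ.relIdeal (X v.1) := fun v => by
    simp only [G, aeval_X]
  have hGa : G Ta = Ideal.Quotient.mkₐ k Δ.relIdeal (Δ.mon a) := by
    simp only [mon_def, map_prod, map_pow, Ta]
    exact Finset.prod_congr rfl fun j _ => by rw [hGX]
  have hGb : G Tb = Ideal.Quotient.mkₐ k Δ.relIdeal (Δ.mon b) := by
    simp only [mon_def, map_prod, map_pow, Tb]
    exact Finset.prod_congr rfl fun j _ => by rw [hGX]
  refine ⟨AlgEquiv.ofAlgHom F G ?_ ?_⟩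
  · apply MvPolynomial.algHom_ext
    intro v
    rw [AlgHom.comp_apply, hGX, hFmk, hφX v.1 v.2]
    rfl
  · apply Ideal.Quotient.algHom_ext
    apply MvPolynomial.algHom_ext
    intro v
    rw [AlgHom.comp_apply, AlgHom.comp_apply, hFmk, AlgHom.comp_apply, AlgHom.id_apply]
    by_cases h : Δ.fs v = a ∨ Δ.fs v = b
    · rw [hφX v h, hGX]
    · obtain ⟨i, j, rfl⟩ := Δ.exists_vk v
      have hi : Δ.Lin i := hL i (fun h' => h (Or.inl h')) (fun h' => h (Or.inr h'))
      have hX : Δ.mon i = X (Δ.vk i j) := mon_lin Δ i hi j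
      rw [← hX, hφ, map_add, map_mul, map_mul, hGa, hGb]
      have hC : ∀ c, G (C c) = Ideal.Quotient.mkₐ k Δ.relIdeal (C c) := fun c =>
        (G.commutes c).trans ((Ideal.Quotient.mkₐ k Δ.relIdeal).commutes c).symm
      rw [hC, hC, ← map_mul, ← map_mul, ← map_add]
      refine Ideal.Quotient.eq.2 ?_
      have := Ideal.sub_mem _ (Ideal.add_mem _ (Ideal.mul_mem_left _ (C (u i)) (Δ.rel_mem a))
        (Ideal.mul_mem_left _ (C (w i)) (Δ.rel_mem b))) (Δ.rel_mem i)
      convert this using 1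
      rw [← hu1 i, ← hu2 i]
      simp only [map_add, map_mul]
      ring

end TrinomialData

/-- Over an algebraically closed field `k`, if `k[Δ]` is a smooth `k`-algebra
for trinomial data `Δ`, then `k[Δ]` is a polynomial ring over `k`. -/
theorem trinomialData_smooth_iff_polynomial [IsAlgClosed k] (Δ : TrinomialData k)
    (hsm : Algebra.Smooth k Δ.Ring) :
    ∃ N : ℕ, Nonempty (Δ.Ring ≃ₐ[k] MvPolynomial (Fin N) k) := by
  obtain ⟨a, b, hab, hL⟩ := Δ.exists_pair hsm.formallySmooth
  obtain ⟨e⟩ := Δ.poly_of_pair a b hab hL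
  haveI : Finite Δ.Vars := inferInstanceAs (Finite (Σ i : Fin (Δ.r + 1), Fin (Δ.n i)))
  exact ⟨_, ⟨e.trans (MvPolynomial.renameEquiv k (Finite.equivFin _))⟩⟩
end

section
/- Assume the field k is algebraically closed. Let B be a unirational unique factorization domain of finite transcendence degree n ≥ 1 over k. If B admits an effective unmixed Z^{n−1}-grading with B_0 = k, then there exist reduced trinomial data Δ over k and m ∈ N such that B is isomorphic as a k-algebra to the polynomial ring in m variables over k[Δ]. -/
open MvPolynomial

variable {k : Type*} [Field k]

section GradedPart
variable {K : Type*} [Field K] {B : Type*} [CommRing B] [IsDomain B] [Algebra K B] {d : ℕ}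
  (𝒜 : (Fin d → ℤ) → Submodule K B) [GradedAlgebra 𝒜]

theorem gr_mul {f g : B} {h : Fin d → ℤ} (hfg : f * g ∈ 𝒜 h) (hne : f * g ≠ 0) :
    ∃ i j, i + j = h ∧ f ∈ 𝒜 i ∧ g ∈ 𝒜 j := by
  classical
  have hf : f ≠ 0 := left_ne_zero_of_mul hne
  have hg : g ≠ 0 := right_ne_zero_of_mul hne
  set F := DirectSum.decompose 𝒜 f with hF
  set G := DirectSum.decompose 𝒜 g with hG
  have hF0 : F ≠ 0 := by
    intro h0; apply hf
    have := DirectSum.decompose_zero (ℳ := 𝒜)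
    exact (DirectSum.decompose 𝒜).injective (by rw [← hF, h0, this])
  have hG0 : G ≠ 0 := by
    intro h0; apply hg
    have := DirectSum.decompose_zero (ℳ := 𝒜)
    exact (DirectSum.decompose 𝒜).injective (by rw [← hG, h0, this])
  have key : ∀ a ∈ F.support, ∀ c ∈ G.support, UniqueAdd F.support G.support a c → a + c = h := by
    intro a ha c hc hu
    by_contra hne'
    have h1 : ((F * G) (a + c) : B) = F a * G c := by
      rw [DirectSum.coe_mul_apply]
      rw [Finset.sum_eq_single (a, c)]
      · rintro ⟨a', c'⟩ hm hn
        simp only [Finset.mem_filter, Finset.mem_product] at hm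
        exact absurd (hu hm.1.1 hm.1.2 hm.2) (fun h => hn (Prod.ext h.1 h.2))
      · intro hm
        exfalso; apply hm; rw [Finset.mem_filter, Finset.mem_product]; exact ⟨⟨ha, hc⟩, rfl⟩
    have h2 : ((F * G) (a + c) : B) = 0 := by
      rw [hF, hG, ← DirectSum.decompose_mul]
      exact DirectSum.decompose_of_mem_ne 𝒜 hfg (Ne.symm hne')
    rw [h1] at h2
    rcases mul_eq_zero.mp h2 with h3 | h3
    · rw [DFinsupp.mem_support_iff] at ha
      exact ha (Subtype.ext h3)
    · rw [DFinsupp.mem_support_iff] at hc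
      exact hc (Subtype.ext h3)
  have hcard : ¬ 1 < F.support.card * G.support.card := by
    intro hlt
    obtain ⟨p1, hp1, p2, hp2, hne12, hu1, hu2⟩ := TwoUniqueSums.uniqueAdd_of_one_lt_card hlt
    rw [Finset.mem_product] at hp1 hp2
    have e1 := key _ hp1.1 _ hp1.2 hu1
    have e2 := key _ hp2.1 _ hp2.2 hu2
    have := hu1 hp2.1 hp2.2 (e2.trans e1.symm)
    exact hne12 (Prod.ext this.1.symm this.2.symm)
  have hFc : 0 < F.support.card := Finset.card_pos.mpr (by
    rw [Finset.nonempty_iff_ne_empty, Ne, DFinsupp.support_eq_empty]; exact hF0)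
  have hGc : 0 < G.support.card := Finset.card_pos.mpr (by
    rw [Finset.nonempty_iff_ne_empty, Ne, DFinsupp.support_eq_empty]; exact hG0)
  have hF1 : F.support.card = 1 := by nlinarith
  have hG1 : G.support.card = 1 := by nlinarith
  obtain ⟨i, hi⟩ := Finset.card_eq_one.mp hF1
  obtain ⟨j, hj⟩ := Finset.card_eq_one.mp hG1
  have hfi : f ∈ 𝒜 i := by
    rw [← DirectSum.sum_support_decompose 𝒜 f, ← hF, hi]
    simp
  have hgj : g ∈ 𝒜 j := by
    rw [← DirectSum.sum_support_decompose 𝒜 g, ← hG, hj]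
    simp
  refine ⟨i, j, ?_, hfi, hgj⟩
  exact DirectSum.degree_eq_of_mem_mem 𝒜 (SetLike.mul_mem_graded hfi hgj) hfg hne

theorem gr_dvd {f g : B} {h : Fin d → ℤ} (hg : g ∈ 𝒜 h) (hne : g ≠ 0) (hd : f ∣ g) :
    ∃ i, f ∈ 𝒜 i := by
  obtain ⟨c, rfl⟩ := hd
  obtain ⟨i, j, _, hi, _⟩ := gr_mul 𝒜 hg hne
  exact ⟨i, hi⟩

theorem gr_unit (hunmixed : ∀ g : Fin d → ℤ, 𝒜 g ≠ ⊥ → 𝒜 (-g) ≠ ⊥ → g = 0)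
    (hB0 : ∀ b ∈ 𝒜 (0 : Fin d → ℤ), ∃ c : K, b = algebraMap K B c) {u : B} (hu : IsUnit u) :
    ∃ c : K, c ≠ 0 ∧ u = algebraMap K B c := by
  obtain ⟨v, hv⟩ := hu.exists_right_inv
  have h1 : u * v ∈ 𝒜 0 := by rw [hv]; exact SetLike.one_mem_graded 𝒜
  obtain ⟨i, j, hij, hi, hj⟩ := gr_mul 𝒜 h1 (by rw [hv]; exact one_ne_zero)
  have hj' : j = -i := by rw [eq_neg_iff_add_eq_zero, add_comm]; exact hij
  subst hj'
  have hv0 : v ≠ 0 := by rintro rfl; simp at hv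
  have : i = 0 := hunmixed i (fun h => hu.ne_zero (by rw [h] at hi; simpa using hi))
    (fun h => hv0 (by rw [h] at hj; simpa using hj))
  subst this
  obtain ⟨c, hc⟩ := hB0 _ hi
  refine ⟨c, ?_, hc⟩
  rintro rfl
  exact hu.ne_zero (by simpa using hc)

/-- sum of elements in distinct degrees -/
theorem gr_indep {ι : Type*} (s : Finset ι) (f : ι → B) (deg : ι → Fin d → ℤ)
    (hf : ∀ i ∈ s, f i ∈ 𝒜 (deg i)) (hinj : Set.InjOn deg s) (hsum : ∑ i ∈ s, f i = 0) :
    ∀ i ∈ s, f i = 0 := by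
  classical
  intro i hi
  have h1 : (DirectSum.decompose 𝒜 (∑ j ∈ s, f j) (deg i) : B) = f i := by
    rw [DirectSum.decompose_sum, DFinsupp.finsetSum_apply, AddSubmonoidClass.coe_finsetSum]
    rw [Finset.sum_eq_single i]
    · exact DirectSum.decompose_of_mem_same 𝒜 (hf i hi)
    · intro j hj hne
      exact DirectSum.decompose_of_mem_ne 𝒜 (hf j hj) (fun h => hne (hinj hj hi h))
    · intro h; exact absurd hi h
  rw [← h1, hsum]
  simp

theorem gr_prod {J : Type*} (p : J → B) (deg : J → Fin d → ℤ) (hp : ∀ j, p j ∈ 𝒜 (deg j))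
    (e : J →₀ ℕ) : (e.prod fun j n => p j ^ n) ∈ 𝒜 (Finsupp.linearCombination ℕ deg e) := by
  rw [Finsupp.linearCombination_apply]
  exact SetLike.prod_pow_mem_graded 𝒜 deg p e (F := e.support) (fun j _ => hp j) |> fun h => by
    simpa [Finsupp.prod, Finsupp.sum] using h

end GradedPart

/-- natural-number independence implies integer independence -/
theorem linInd_int_of_nat {J M : Type*} [AddCommGroup M] (v : J → M) (h : LinearIndependent ℕ v) :
    LinearIndependent ℤ v := by
  classical
  rw [linearIndependent_iff]
  intro l hl
  let e : J →₀ ℕ := l.mapRange Int.toNat rfl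
  let e' : J →₀ ℕ := l.mapRange (fun z => (-z).toNat) rfl
  have hz : ∀ z : ℤ, z = (z.toNat : ℤ) - ((-z).toNat : ℤ) := by intro z; omega
  have h2 : Finsupp.linearCombination ℕ v e = Finsupp.linearCombination ℕ v e' := by
    rw [← sub_eq_zero]
    rw [Finsupp.linearCombination_apply, Finsupp.linearCombination_apply] at *
    rw [Finsupp.sum_of_support_subset (s := l.support) _ (by intro x; simp [e]; intro h1 h2; simp [h2] at h1) _ (by simp),
      Finsupp.sum_of_support_subset (s := l.support) e' (by intro x; simp [e']; intro h1 h2; simp [h2] at h1) _ (by simp),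
      ← Finset.sum_sub_distrib]
    rw [← hl, Finsupp.sum]
    refine Finset.sum_congr rfl fun i _ => ?_
    conv_rhs => rw [hz (l i), sub_smul, natCast_zsmul, natCast_zsmul]
    simp [e, e']
  have h3 : e = e' := h h2
  ext j
  have := DFunLike.congr_fun h3 j
  simp only [e, e', Finsupp.mapRange_apply] at this
  simp only [Finsupp.coe_zero, Pi.zero_apply]
  omega



theorem luroth_embed {K : Type*} [Field K] [IsAlgClosed K] {s : ℕ} {E : Type*} [Field E] [Algebra K E]
    (j : E →ₐ[K] FractionRing (MvPolynomial (Fin s) K)) (u : E)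
    (hu : ∀ c : K, u ≠ algebraMap K E c)
    (halg : ∀ e : E, IsAlgebraic (Algebra.adjoin K {u}) e) :
    ∃ ψ : E →+* RatFunc K, ∀ c, ψ (algebraMap K E c) = algebraMap K (RatFunc K) c := by
  classical
  obtain ⟨P, Q, hQ0, hPQ⟩ := IsFractionRing.div_surjective (A := MvPolynomial (Fin s) K) (j u)
  have hQ : Q ≠ 0 := nonZeroDivisors.ne_zero hQ0
  have hQF : algebraMap (MvPolynomial (Fin s) K) (FractionRing (MvPolynomial (Fin s) K)) Q ≠ 0 := by simpa using hQ
  -- first point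
  obtain ⟨p, hp⟩ : ∃ p, eval p Q ≠ 0 := by
    by_contra! h
    exact hQ (MvPolynomial.funext (by simpa using h))
  set c := eval p P / eval p Q with hc
  have h1 : (P - C c * Q) ≠ 0 := by
    intro h
    apply hu c
    apply RingHom.injective j.toRingHom
    change j _ = j _
    rw [← hPQ, j.commutes, IsScalarTower.algebraMap_apply K (MvPolynomial (Fin s) K) (FractionRing (MvPolynomial (Fin s) K)), div_eq_iff hQF, ← map_mul]
    congr 1
    exact sub_eq_zero.mp h
  obtain ⟨q, hq⟩ : ∃ q, eval q ((P - C c * Q) * Q) ≠ 0 := by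
    by_contra! h
    exact mul_ne_zero h1 hQ (MvPolynomial.funext (by simpa using h))
  rw [map_mul] at hq
  have hqQ : eval q Q ≠ 0 := right_ne_zero_of_mul hq
  have hqP : eval q P ≠ c * eval q Q := by
    intro h
    apply left_ne_zero_of_mul hq
    simp [h]
  let ev : (MvPolynomial (Fin s) K) →ₐ[K] Polynomial K :=
    aeval (fun i => Polynomial.C (p i) + Polynomial.X * Polynomial.C (q i - p i))
  have ev0 : ∀ f : (MvPolynomial (Fin s) K), (ev f).eval 0 = eval p f := by
    intro f
    have : ((Polynomial.evalRingHom (0:K)).comp ev.toRingHom) = eval p := by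
      apply MvPolynomial.ringHom_ext
      · intro r; simp [ev]
      · intro i; simp [ev]
    exact congrArg (fun h => h f) this
  have ev1 : ∀ f : (MvPolynomial (Fin s) K), (ev f).eval 1 = eval q f := by
    intro f
    have : ((Polynomial.evalRingHom (1:K)).comp ev.toRingHom) = eval q := by
      apply MvPolynomial.ringHom_ext
      · intro r; simp [ev]
      · intro i; simp [ev]
    exact congrArg (fun h => h f) this
  have evQ : ev Q ≠ 0 := by
    intro h; apply hp; rw [← ev0, h]; simp
  let evF : (MvPolynomial (Fin s) K) →+* RatFunc K := (algebraMap (Polynomial K) (RatFunc K)).comp ev.toRingHom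
  have evF0 : ∀ f, evF f = 0 ↔ ev f = 0 := by
    intro f; simp [evF]
  have : (RingHom.ker evF).IsPrime := RingHom.ker_isPrime evF
  let M : Submonoid (MvPolynomial (Fin s) K) := (RingHom.ker evF).primeCompl
  have hM : M ≤ nonZeroDivisors (MvPolynomial (Fin s) K) := by
    intro x hx
    apply mem_nonZeroDivisors_of_ne_zero
    rintro rfl
    exact hx (by simp)
  have memM : ∀ x, x ∈ M ↔ evF x ≠ 0 := fun x => Iff.rfl
  let O := Localization.subalgebra.ofField (FractionRing (MvPolynomial (Fin s) K)) M hM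
  have memO : ∀ z : (FractionRing (MvPolynomial (Fin s) K)), z ∈ O ↔ ∃ (a b : (MvPolynomial (Fin s) K)) (_ : b ∈ M), z = algebraMap (MvPolynomial (Fin s) K) (FractionRing (MvPolynomial (Fin s) K)) a * (algebraMap (MvPolynomial (Fin s) K) (FractionRing (MvPolynomial (Fin s) K)) b)⁻¹ :=
    fun z => Iff.rfl
  have : IsLocalization M O := Localization.subalgebra.isLocalization_ofField (FractionRing (MvPolynomial (Fin s) K)) M hM
  have : IsIntegrallyClosed O := isIntegrallyClosed_of_isLocalization O M hM
  let θ : O →+* RatFunc K := IsLocalization.lift (M := M) (g := evF)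
    (fun y => isUnit_iff_ne_zero.mpr ((memM _).1 y.2))
  have hθ : ∀ a : (MvPolynomial (Fin s) K), θ (algebraMap (MvPolynomial (Fin s) K) O a) = evF a := fun a => IsLocalization.lift_eq _ a
  have ne0 : ∀ b ∈ M, algebraMap (MvPolynomial (Fin s) K) (FractionRing (MvPolynomial (Fin s) K)) b ≠ 0 := by
    intro b hb
    have := nonZeroDivisors.ne_zero (hM hb)
    simpa using this
  have hθ2 : ∀ (z : O) (a b : MvPolynomial (Fin s) K), (z : (FractionRing (MvPolynomial (Fin s) K))) * algebraMap (MvPolynomial (Fin s) K) (FractionRing (MvPolynomial (Fin s) K)) b = algebraMap (MvPolynomial (Fin s) K) (FractionRing (MvPolynomial (Fin s) K)) a →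
      θ z * evF b = evF a := by
    intro z a b h
    rw [← hθ, ← hθ, ← map_mul]
    congr 1
    exact Subtype.ext h
  have hinv : ∀ z : O, θ z ≠ 0 → (z : (FractionRing (MvPolynomial (Fin s) K)))⁻¹ ∈ O := by
    intro z hz
    obtain ⟨a, b, hb, h⟩ := (memO z).1 z.2
    have h2 := hθ2 z a b (by rw [h]; field_simp [ne0 b hb])
    refine (memO _).2 ⟨b, a, ?_, ?_⟩
    · rw [memM, ← h2]
      exact mul_ne_zero hz hb
    · rw [h]; simp [mul_comm]
  have huO : j u ∈ O := (memO _).2 ⟨P, Q, by rw [memM, Ne, evF0]; exact evQ, by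
    rw [← hPQ, div_eq_mul_inv]⟩
  -- K-algebra hom from K[X] to O
  let w : Polynomial K →+* O := Polynomial.eval₂RingHom ((algebraMap (MvPolynomial (Fin s) K) O).comp C) ⟨j u, huO⟩
  have hw : ∀ f : Polynomial K, ((w f : O) : (FractionRing (MvPolynomial (Fin s) K))) = j (Polynomial.aeval u f) := by
    intro f
    have : (O.val.toRingHom).comp w = j.toRingHom.comp (Polynomial.aeval u).toRingHom := by
      apply Polynomial.ringHom_ext
      · intro a
        simp [w]
        rfl
      · simp [w]
    exact congrArg (fun h => h f) this
  let u0 : RatFunc K := θ ⟨j u, huO⟩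
  have hu0 : u0 * evF Q = evF P := hθ2 _ _ _ (by change j u * _ = _; rw [← hPQ]; exact div_mul_cancel₀ _ hQF)
  have hu0C : ¬ ∃ c, u0 = RatFunc.C c := by
    rintro ⟨c', h⟩
    rw [h] at hu0
    have h3 : Polynomial.C c' * ev Q = ev P := by
      apply RatFunc.algebraMap_injective K
      simpa [evF] using hu0
    have e0 := congrArg (Polynomial.eval 0) h3
    have e1 := congrArg (Polynomial.eval 1) h3
    simp only [Polynomial.eval_mul, Polynomial.eval_C, ev0, ev1] at e0 e1
    apply hqP
    rw [← e1, hc, ← e0]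
    field_simp
  have htr : Transcendental K u0 := RatFunc.transcendental_of_ne_C u0 hu0C
  have hθw : ∀ f, θ (w f) = Polynomial.aeval u0 f := by
    intro f
    have : θ.comp w = (Polynomial.aeval u0).toRingHom := by
      apply Polynomial.ringHom_ext
      · intro a
        simp [w, hθ, evF, ev]
      · simp [w, u0]
    exact congrArg (fun h => h f) this
  have hall : ∀ e : E, j e ∈ O := by
    intro e
    obtain ⟨y, hy, hint⟩ := (halg e).exists_integral_multiple
    obtain ⟨y, hy'⟩ := y
    have hy2 := hy'
    rw [Algebra.adjoin_singleton_eq_range_aeval] at hy2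
    obtain ⟨f, rfl⟩ := hy2
    have hf : f ≠ 0 := by rintro rfl; apply hy; ext; simp
    have hfθ : θ (w f) ≠ 0 := by
      rw [hθw]
      intro h
      exact htr ⟨f, hf, h⟩
    have hadj : ∀ z ∈ Algebra.adjoin K {u}, j z ∈ O := by
      intro z hz
      rw [Algebra.adjoin_singleton_eq_range_aeval] at hz
      obtain ⟨f, rfl⟩ := hz
      have := (w f).2
      rw [hw] at this
      exact this
    let φ : Algebra.adjoin K {u} →+* O :=
      (j.toRingHom.comp (Algebra.adjoin K {u}).val.toRingHom).codRestrict O (fun z => hadj z z.2)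
    have hint2 := hint.map_of_comp_eq φ j.toRingHom (by ext z; rfl)
    obtain ⟨y, hy⟩ := (IsIntegrallyClosed.isIntegral_iff (R := O)).mp hint2
    have h5 : j (Polynomial.aeval u f) * j e ∈ O := by
      have : (y : (FractionRing (MvPolynomial (Fin s) K))) = j (Polynomial.aeval u f) * j e := by
        rw [← map_mul]; exact hy
      rw [← this]; exact y.2
    have h6 := hinv _ hfθ
    rw [hw] at h6
    have h7 : j (Polynomial.aeval u f) ≠ 0 := by
      rw [← hw]
      intro h
      apply hfθ
      have : w f = 0 := Subtype.ext h
      rw [this, map_zero]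
    have := O.mul_mem h6 h5
    rwa [inv_mul_cancel_left₀ h7] at this
  refine ⟨θ.comp (j.toRingHom.codRestrict O hall), fun c => ?_⟩
  have : (j.toRingHom.codRestrict O hall) (algebraMap K E c) = algebraMap (MvPolynomial (Fin s) K) O (C c) := by
    apply Subtype.ext
    change j (algebraMap K E c) = _
    rw [j.commutes]; rfl
  rw [RingHom.comp_apply, this, hθ]
  simp [evF, ev]

theorem luroth_gen {K : Type*} [Field K] [IsAlgClosed K] {s : ℕ} {E : Type*} [Field E] [Algebra K E]
    (j : E →ₐ[K] FractionRing (MvPolynomial (Fin s) K)) (u : E)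
    (hu : ∀ c : K, u ≠ algebraMap K E c)
    (halg : ∀ e : E, IsAlgebraic (Algebra.adjoin K {u}) e) :
    ∃ t : E, ∀ e : E, ∃ P Q : Polynomial K, Polynomial.aeval t Q ≠ 0 ∧
      e * Polynomial.aeval t Q = Polynomial.aeval t P := by
  obtain ⟨ψ0, hψ0⟩ := luroth_embed j u hu halg
  let ψ : E →ₐ[K] RatFunc K := ⟨ψ0, hψ0⟩
  have hL := RatFunc.Luroth.eq_adjoin_generator (E := ψ.fieldRange)
  obtain ⟨t, ht⟩ : RatFunc.Luroth.generator ψ.fieldRange ∈ ψ.fieldRange :=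
    RatFunc.Luroth.generator_mem
  refine ⟨t, fun e => ?_⟩
  have he : ψ e ∈ ψ.fieldRange := ⟨e, rfl⟩
  have ht : ψ t = _ := ht
  rw [hL, ← ht, IntermediateField.mem_adjoin_simple_iff] at he
  obtain ⟨P, Q, h⟩ := he
  by_cases hQ : Polynomial.aeval (ψ t) Q = 0
  · refine ⟨0, 1, by simp, ?_⟩
    rw [hQ, div_zero] at h
    have := RingHom.injective ψ.toRingHom (h.trans (map_zero ψ).symm)
    simp [this]
  · have hQ' : ψ (Polynomial.aeval t Q) ≠ 0 := by
      rwa [← Polynomial.aeval_algHom_apply]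
    refine ⟨P, Q, fun h => hQ' (by rw [h, map_zero]), ?_⟩
    apply RingHom.injective ψ.toRingHom
    change ψ _ = ψ _
    rw [map_mul, ← Polynomial.aeval_algHom_apply, ← Polynomial.aeval_algHom_apply, h]
    exact div_mul_cancel₀ _ hQ



section FieldPart
variable {K : Type*} [Field K] {B : Type*} [CommRing B] [IsDomain B] [Algebra K B] {d : ℕ}
  (𝒜 : (Fin d → ℤ) → Submodule K B) [GradedAlgebra 𝒜]

/-- field of degree zero homogeneous fractions -/
noncomputable def gr0 : IntermediateField K (FractionRing B) where
  carrier := {z | ∃ h, ∃ a ∈ 𝒜 h, ∃ b ∈ 𝒜 h, b ≠ 0 ∧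
    z = algebraMap B (FractionRing B) a / algebraMap B (FractionRing B) b}
  mul_mem' := by
    rintro _ _ ⟨h, a, ha, b, hb, hb0, rfl⟩ ⟨h', a', ha', b', hb', hb0', rfl⟩
    refine ⟨h + h', a * a', SetLike.mul_mem_graded ha ha', b * b', SetLike.mul_mem_graded hb hb',
      mul_ne_zero hb0 hb0', ?_⟩
    rw [map_mul, map_mul, div_mul_div_comm]
  add_mem' := by
    rintro _ _ ⟨h, a, ha, b, hb, hb0, rfl⟩ ⟨h', a', ha', b', hb', hb0', rfl⟩
    refine ⟨h + h', a * b' + b * a', Submodule.add_mem _ (SetLike.mul_mem_graded ha hb')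
      (SetLike.mul_mem_graded hb ha'), b * b', SetLike.mul_mem_graded hb hb',
      mul_ne_zero hb0 hb0', ?_⟩
    rw [map_add, map_mul, map_mul, map_mul, div_add_div]
    · simpa using hb0
    · simpa using hb0'
  algebraMap_mem' := by
    intro c
    refine ⟨0, algebraMap K B c, SetLike.algebraMap_mem_graded 𝒜 c, 1, SetLike.one_mem_graded 𝒜,
      one_ne_zero, ?_⟩
    rw [map_one, div_one, ← IsScalarTower.algebraMap_apply]
  inv_mem' := by
    rintro _ ⟨h, a, ha, b, hb, hb0, rfl⟩
    by_cases h0 : a = 0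
    · subst h0
      refine ⟨0, 0, Submodule.zero_mem _, 1, SetLike.one_mem_graded 𝒜, one_ne_zero, ?_⟩
      simp
    · exact ⟨h, b, hb, a, ha, h0, by rw [inv_div]⟩

theorem mem_gr0 (z : FractionRing B) : z ∈ gr0 𝒜 ↔ ∃ h, ∃ a ∈ 𝒜 h, ∃ b ∈ 𝒜 h, b ≠ 0 ∧
    z = algebraMap B (FractionRing B) a / algebraMap B (FractionRing B) b := Iff.rfl

theorem gr0_common {ι : Type*} (s : Finset ι) (c : ι → gr0 𝒜) : ∃ δ, ∃ D ∈ 𝒜 δ, D ≠ 0 ∧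
    ∀ i ∈ s, ∃ a ∈ 𝒜 δ, (c i : FractionRing B) * algebraMap B (FractionRing B) D =
      algebraMap B (FractionRing B) a := by
  classical
  induction s using Finset.induction_on with
  | empty => exact ⟨0, 1, SetLike.one_mem_graded 𝒜, one_ne_zero, by simp⟩
  | insert i s _ ih =>
    obtain ⟨δ, D, hD, hD0, h⟩ := ih
    obtain ⟨h', a, ha, b, hb, hb0, hc⟩ := (mem_gr0 𝒜 _).1 (c i).2
    refine ⟨δ + h', D * b, SetLike.mul_mem_graded hD hb, mul_ne_zero hD0 hb0, ?_⟩
    intro j hj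
    rcases Finset.mem_insert.1 hj with rfl | hj
    · refine ⟨D * a, SetLike.mul_mem_graded hD ha, ?_⟩
      have : algebraMap B (FractionRing B) b ≠ 0 := by simpa using hb0
      rw [hc, map_mul, map_mul]
      field_simp
    · obtain ⟨a', ha', h2⟩ := h j hj
      refine ⟨a' * b, SetLike.mul_mem_graded ha' hb, ?_⟩
      rw [map_mul, map_mul, ← h2, mul_assoc]

theorem gr0_algInd {J : Type*} (y : J → B) (deg : J → Fin d → ℤ) (hy : ∀ j, y j ∈ 𝒜 (deg j))
    (hy0 : ∀ j, y j ≠ 0) (hdeg : LinearIndependent ℕ deg) :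
    AlgebraicIndependent (gr0 𝒜) (fun j => algebraMap B (FractionRing B) (y j)) := by
  classical
  rw [algebraicIndependent_iff]
  intro p hp
  obtain ⟨δ, D, hD, hD0, h⟩ := gr0_common 𝒜 p.support (fun m => p.coeff m)
  choose! a ha haD using h
  have hinjB : Function.Injective (algebraMap B (FractionRing B)) := IsFractionRing.injective _ _
  have hsum : ∑ m ∈ p.support, a m * (m.prod fun j n => y j ^ n) = 0 := by
    apply hinjB
    rw [map_sum, map_zero]
    have : ∑ m ∈ p.support, algebraMap B (FractionRing B) (a m * (m.prod fun j n => y j ^ n)) =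
        algebraMap B (FractionRing B) D * (aeval (fun j => algebraMap B (FractionRing B) (y j)) p) := by
      rw [MvPolynomial.aeval_def, MvPolynomial.eval₂_eq, Finset.mul_sum]
      refine Finset.sum_congr rfl fun m hm => ?_
      rw [map_mul, ← haD m hm, Finsupp.prod, map_prod]
      simp only [map_pow]
      change _ = _ * (((coeff m p : gr0 𝒜) : FractionRing B) * _)
      ring
    rw [this, hp, mul_zero]
  have h0 := gr_indep 𝒜 p.support _ (fun m => δ + Finsupp.linearCombination ℕ deg m)
    (fun m hm => SetLike.mul_mem_graded (ha m hm) (gr_prod 𝒜 y deg hy m))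
    (fun m _ m' _ hmm => hdeg (add_left_cancel hmm)) hsum
  by_contra hne
  obtain ⟨m, hm⟩ := MvPolynomial.ne_zero_iff.1 hne
  have hms : m ∈ p.support := MvPolynomial.mem_support_iff.2 hm
  have h1 := h0 m hms
  have h2 : (m.prod fun j n => y j ^ n) ≠ 0 := Finset.prod_ne_zero_iff.2 fun j _ => pow_ne_zero _ (hy0 j)
  have h3 : a m = 0 := (mul_eq_zero.1 h1).resolve_right h2
  have h4 := haD m hms
  rw [h3, map_zero] at h4
  have h5 : algebraMap B (FractionRing B) D ≠ 0 := by simpa using hD0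
  exact hm (Subtype.ext ((mul_eq_zero.1 h4).resolve_right h5))

theorem exists_degs (heff : AddSubgroup.closure {g : Fin d → ℤ | 𝒜 g ≠ ⊥} = ⊤) :
    ∃ (deg : Fin d → Fin d → ℤ), LinearIndependent ℕ deg ∧ ∀ j, 𝒜 (deg j) ≠ ⊥ := by
  classical
  let f : (Fin d → ℤ) →+ (Fin d → ℚ) :=
    { toFun := fun g i => (g i : ℚ), map_zero' := by ext; simp, map_add' := by intros; ext; simp }
  let v : {g : Fin d → ℤ // 𝒜 g ≠ ⊥} → (Fin d → ℚ) := fun g => f g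
  obtain ⟨κ, a, ha, hspan, hli⟩ := exists_linearIndependent' ℚ v
  have htop : Submodule.span ℚ (Set.range v) = ⊤ := by
    have h1 : ∀ g : Fin d → ℤ, f g ∈ Submodule.span ℚ (Set.range v) := by
      intro g
      have hg : g ∈ AddSubgroup.closure {g : Fin d → ℤ | 𝒜 g ≠ ⊥} := by rw [heff]; trivial
      induction hg using AddSubgroup.closure_induction with
      | mem x hx => exact Submodule.subset_span ⟨⟨x, hx⟩, rfl⟩
      | zero => rw [map_zero]; exact Submodule.zero_mem _
      | add x y _ _ hx hy => rw [map_add]; exact Submodule.add_mem _ hx hy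
      | neg x _ hx => rw [map_neg]; exact Submodule.neg_mem _ hx
    rw [eq_top_iff, ← (Pi.basisFun ℚ (Fin d)).span_eq, Submodule.span_le]
    rintro _ ⟨i, rfl⟩
    have : f (Pi.single i 1) = Pi.basisFun ℚ (Fin d) i := by
      ext j
      simp [f, Pi.single_apply]
    rw [← this]
    exact h1 _
  let b := Module.Basis.mk hli (by rw [hspan, htop])
  have : Fintype κ := FiniteDimensional.fintypeBasisIndex b
  have hcard : Fintype.card κ = d := by
    rw [← Module.finrank_eq_card_basis b]; simp
  let e : Fin d ≃ κ := (Fintype.equivFinOfCardEq hcard).symm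
  refine ⟨fun i => (a (e i)).1, ?_, fun j => (a (e j)).2⟩
  have h2 : LinearIndependent ℚ (v ∘ a ∘ e) := hli.comp e e.injective
  have h3 : LinearIndependent ℕ (v ∘ a ∘ e) := h2.restrict_scalars (by
    intro x y h; simpa using h)
  exact LinearIndependent.of_comp f.toNatLinearMap h3

theorem gr0_alg (heff : AddSubgroup.closure {g : Fin d → ℤ | 𝒜 g ≠ ⊥} = ⊤)
    (x : Fin (d + 1) → B) (hx : IsTranscendenceBasis K x) (u : gr0 𝒜)
    (hu : Transcendental K u) (e : gr0 𝒜) : IsAlgebraic (Algebra.adjoin K {u}) e := by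
  obtain ⟨deg, hdeg, hne⟩ := exists_degs 𝒜 heff
  have : ∀ j, ∃ y ∈ 𝒜 (deg j), y ≠ 0 := fun j => Submodule.exists_mem_ne_zero_of_ne_bot (hne j)
  choose y hy hy0 using this
  have hai := gr0_algInd 𝒜 y deg hy hy0 hdeg
  have := IsLocalization.isAlgebraic (FractionRing B) (nonZeroDivisors B)
  have hx' : IsTranscendenceBasis K (algebraMap B (FractionRing B) ∘ x) := hx.algebraMap_comp
  have h1 := hx'.lift_cardinalMk_eq_trdeg
  have h2 := hai.lift_cardinalMk_le_trdeg
  have h3 := _root_.trdeg_add_eq (R := K) (S := gr0 𝒜) (A := FractionRing B)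
  simp only [Cardinal.mk_fin, Cardinal.lift_natCast, Cardinal.lift_uzero] at h1 h2
  rw [← h1] at h3
  have h4 : Algebra.trdeg K (gr0 𝒜) ≤ 1 := by
    have hfin : Algebra.trdeg K (gr0 𝒜) < Cardinal.aleph0 :=
      lt_of_le_of_lt (le_self_add.trans h3.le) (Cardinal.natCast_lt_aleph0)
    have hfin2 : Algebra.trdeg (gr0 𝒜) (FractionRing B) < Cardinal.aleph0 :=
      lt_of_le_of_lt (le_add_self.trans h3.le) (Cardinal.natCast_lt_aleph0)
    obtain ⟨p, hp⟩ := Cardinal.lt_aleph0.1 hfin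
    obtain ⟨q, hq⟩ := Cardinal.lt_aleph0.1 hfin2
    rw [hp, hq] at h3
    rw [hq] at h2
    rw [hp]
    norm_cast at h2 h3 ⊢
    omega
  have hu' : AlgebraicIndependent K (fun _ : Unit => u) := by
    rwa [algebraicIndependent_unique_type_iff]
  have hb := hu'.isTranscendenceBasis_of_lift_trdeg_le_of_finite (by
    simpa using h4)
  have := hb.isAlgebraic
  rw [Set.range_const] at this
  exact this.isAlgebraic e

theorem gr_nonconst (x : Fin (d + 1) → B) (hx : IsTranscendenceBasis K x) :
    ∃ h, ∃ f ∈ 𝒜 h, ∃ f' ∈ 𝒜 h, f' ≠ 0 ∧ ∀ c : K, f ≠ c • f' := by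
  classical
  by_contra! hcon
  let s : Set B := {b | ∃ h, b ∈ 𝒜 h}
  have htop : Algebra.adjoin K s = ⊤ := by
    rw [eq_top_iff]
    rintro b -
    rw [← DirectSum.sum_support_decompose 𝒜 b]
    exact Subalgebra.sum_mem _ fun i _ => Algebra.subset_adjoin ⟨i, SetLike.coe_mem _⟩
  have : Algebra.IsAlgebraic (Algebra.adjoin K s) B := by
    refine ⟨fun b => ?_⟩
    have hb : b ∈ Algebra.adjoin K s := by rw [htop]; trivial
    exact isAlgebraic_algebraMap (⟨b, hb⟩ : Algebra.adjoin K s)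
  obtain ⟨t, hts, ht⟩ := exists_isTranscendenceBasis_subset (R := K) s
  have hcard := ht.lift_cardinalMk_eq hx
  choose deg hdeg using fun b : t => hts b.2
  have hli : LinearIndependent ℕ deg := by
    intro e e' hee
    have m1 := gr_prod 𝒜 (fun b : t => (b : B)) deg hdeg e
    have m2 := gr_prod 𝒜 (fun b : t => (b : B)) deg hdeg e'
    rw [← hee] at m2
    have hne : (e'.prod fun (b : t) n => (b : B) ^ n) ≠ 0 :=
      Finset.prod_ne_zero_iff.2 fun j _ => pow_ne_zero _ (ht.1.ne_zero j)
    have hne' : (e.prod fun (b : t) n => (b : B) ^ n) ≠ 0 :=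
      Finset.prod_ne_zero_iff.2 fun j _ => pow_ne_zero _ (ht.1.ne_zero j)
    obtain ⟨c, hc⟩ := hcon _ _ m1 _ m2 hne
    have hinj := ht.1
    rw [AlgebraicIndependent] at hinj
    have h3 : (monomial e (1 : K)) = monomial e' c := by
      apply hinj
      rw [aeval_monomial, aeval_monomial, map_one, one_mul, hc, Algebra.smul_def]
    rw [MvPolynomial.monomial_eq_monomial_iff] at h3
    rcases h3 with h3 | h3
    · exact h3.1
    · exact absurd h3.1 one_ne_zero
  have hli2 := (linInd_int_of_nat deg hli).cardinal_lift_le_rank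
  simp at hli2 hcard
  rw [hcard] at hli2
  norm_cast at hli2
  omega

end FieldPart



section PencilPart
variable {K : Type*} [Field K] {B : Type*} [CommRing B] [IsDomain B] [Algebra K B] {d : ℕ}
  (𝒜 : (Fin d → ℤ) → Submodule K B)

/-- a coprime pencil of homogeneous elements generating the degree-zero fractions -/
structure Pencil (g : Fin d → ℤ) (L : Option K → B) : Prop where
  mem : ∀ l, L l ∈ 𝒜 g
  ne : ∀ l, L l ≠ 0
  g0 : g ≠ 0
  cop : ∀ l m p, Prime p → p ∣ L l → p ∣ L m → l = m
  lin : ∀ l m, l ≠ m → ∀ n, ∃ x y : K, L n = x • L l + y • L m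
  KL : ∀ h f f', f ∈ 𝒜 h → f' ∈ 𝒜 h → f ≠ 0 → f' ≠ 0 → ∃ S S' : Multiset (Option K),
    S.card = S'.card ∧ ∃ c : K, c ≠ 0 ∧ f * (S'.map L).prod = c • (f' * (S.map L).prod)

theorem aeval_split [IsAlgClosed K] {F : Type*} [Field F] [Algebra K F] (a b : F) (hb : b ≠ 0)
    (P : Polynomial K) : ∃ R : Multiset K,
      Polynomial.aeval (a / b) P * b ^ R.card =
        algebraMap K F P.leadingCoeff * (R.map fun α => a - algebraMap K F α * b).prod := by
  refine ⟨P.roots, ?_⟩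
  have h := (IsAlgClosed.splits P).eq_prod_roots
  have h2 := congrArg (Polynomial.aeval (a / b)) h
  rw [map_mul, Polynomial.aeval_C, map_multiset_prod, Multiset.map_map] at h2
  rw [h2, mul_assoc]
  congr 1
  clear h h2
  induction P.roots using Multiset.induction_on with
  | empty => simp
  | cons x s ih =>
    simp only [Multiset.map_cons, Multiset.prod_cons, Multiset.card_cons, ← ih]
    simp only [Function.comp_apply, map_sub, Polynomial.aeval_X, Polynomial.aeval_C]
    rw [pow_succ]
    have : a - algebraMap K F x * b = (a / b - algebraMap K F x) * b := by field_simp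
    rw [this]
    ring

variable [GradedAlgebra 𝒜]

theorem transc_of_algClosed [IsAlgClosed K] {F : Type*} [Field F] [Algebra K F] (u : F)
    (hu : ∀ c : K, u ≠ algebraMap K F c) : Transcendental K u := by
  intro h
  have hi := h.isIntegral
  have := IsAlgClosed.degree_eq_one_of_irreducible K (minpoly.irreducible hi)
  obtain ⟨c, hc⟩ := minpoly.mem_range_of_degree_eq_one K u this
  exact hu c hc.symm

theorem exists_pencil [IsAlgClosed K] [UniqueFactorizationMonoid B]
    (x : Fin (d + 1) → B) (hx : IsTranscendenceBasis K x)
    (hunir : ∃ (s : ℕ) (φ : FractionRing B →+* FractionRing (MvPolynomial (Fin s) K)),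
      ∀ c : K, φ (algebraMap B (FractionRing B) (algebraMap K B c)) =
        algebraMap (MvPolynomial (Fin s) K) (FractionRing (MvPolynomial (Fin s) K)) (C c))
    (heff : AddSubgroup.closure {g : Fin d → ℤ | 𝒜 g ≠ ⊥} = ⊤)
    (hB0 : ∀ b ∈ 𝒜 (0 : Fin d → ℤ), ∃ c : K, b = algebraMap K B c) :
    ∃ g L, Pencil 𝒜 g L := by
  classical
  have hinjB : Function.Injective (algebraMap B (FractionRing B)) := IsFractionRing.injective _ _
  obtain ⟨h0, f, hf, f', hf', hf0, hff⟩ := gr_nonconst 𝒜 x hx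
  let u : gr0 𝒜 := ⟨algebraMap B (FractionRing B) f / algebraMap B (FractionRing B) f',
    (mem_gr0 𝒜 _).2 ⟨h0, f, hf, f', hf', hf0, rfl⟩⟩
  have hu : ∀ c : K, u ≠ algebraMap K (gr0 𝒜) c := by
    intro c hc
    have h1 : algebraMap B (FractionRing B) f / algebraMap B (FractionRing B) f' =
      algebraMap K (FractionRing B) c := congrArg Subtype.val hc
    rw [div_eq_iff (by simpa using hf0), IsScalarTower.algebraMap_apply K B, ← map_mul] at h1
    exact hff c (by rw [Algebra.smul_def]; exact hinjB h1)
  obtain ⟨s, φ, hφ⟩ := hunir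
  let j : gr0 𝒜 →ₐ[K] FractionRing (MvPolynomial (Fin s) K) :=
    { φ.comp (gr0 𝒜).val.toRingHom with
      commutes' := by
        intro c
        have := hφ c
        rw [← IsScalarTower.algebraMap_apply] at this
        rw [IsScalarTower.algebraMap_apply K (MvPolynomial (Fin s) K)
          (FractionRing (MvPolynomial (Fin s) K))]
        exact this }
  obtain ⟨t, ht⟩ := luroth_gen j u hu (gr0_alg 𝒜 heff x hx u (transc_of_algClosed u hu))
  have htc : ∀ c : K, t ≠ algebraMap K (gr0 𝒜) c := by
    rintro c rfl
    obtain ⟨P, Q, hQ, hPQ⟩ := ht u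
    rw [Polynomial.aeval_algebraMap_apply] at hQ hPQ
    rw [Polynomial.aeval_algebraMap_apply, ← eq_div_iff hQ, ← map_div₀] at hPQ
    exact hu _ hPQ
  obtain ⟨h1, a0, ha0, b0, hb0, hb00, hab⟩ := (mem_gr0 𝒜 _).1 t.2
  have ha00 : a0 ≠ 0 := by
    rintro rfl
    apply htc 0
    apply Subtype.ext
    rw [hab]; simp
  obtain ⟨a, b, c, hrel, ha, hb⟩ := UniqueFactorizationMonoid.exists_reduced_factors' a0 b0 hb00
  subst ha hb
  obtain ⟨i, g, hig, hci, hbg⟩ := gr_mul 𝒜 hb0 hb00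
  obtain ⟨i', g', hig', hci', hag⟩ := gr_mul 𝒜 ha0 ha00
  have hc0 : c ≠ 0 := left_ne_zero_of_mul ha00
  have ha_ne : a ≠ 0 := right_ne_zero_of_mul ha00
  have hb_ne : b ≠ 0 := right_ne_zero_of_mul hb00
  have hii : i = i' := DirectSum.degree_eq_of_mem_mem 𝒜 hci hci' hc0
  subst hii
  have hgg : g = g' := by rw [← hig'] at hig; exact add_left_cancel hig
  subst hgg
  have htab : (t : FractionRing B) = algebraMap B (FractionRing B) a / algebraMap B (FractionRing B) b := by
    rw [hab, map_mul, map_mul, mul_div_mul_left _ _ (by simpa using hc0)]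
  have hbF : algebraMap B (FractionRing B) b ≠ 0 := by simpa using hb_ne
  have hnp : ∀ α : K, a - α • b ≠ 0 := by
    intro α h
    apply htc α
    apply Subtype.ext
    change (t : FractionRing B) = algebraMap K (FractionRing B) α
    rw [htab, div_eq_iff hbF, IsScalarTower.algebraMap_apply K B, ← map_mul, ← Algebra.smul_def,
      sub_eq_zero.1 h]
  let L : Option K → B := fun l => l.elim b (fun α => a - α • b)
  have hLn : L none = b := rfl
  have hLs : ∀ α, L (some α) = a - α • b := fun _ => rfl
  have hne : ∀ l, L l ≠ 0 := by
    rintro (_ | α)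
    · exact hb_ne
    · exact hnp α
  have hlin : ∀ l m, l ≠ m → ∀ n, ∃ x y : K, L n = x • L l + y • L m := by
    have key : ∀ l m, l ≠ m → (∃ x y : K, a = x • L l + y • L m) ∧
        (∃ x y : K, b = x • L l + y • L m) := by
      rintro (_ | α) (_ | β) hlm
      · exact absurd rfl hlm
      · refine ⟨⟨β, 1, ?_⟩, ⟨1, 0, ?_⟩⟩ <;> simp [hLn, hLs]
      · refine ⟨⟨1, α, ?_⟩, ⟨0, 1, ?_⟩⟩ <;> simp [hLn, hLs]
      · have h : β - α ≠ 0 := fun h => hlm (by rw [sub_eq_zero.1 h])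
        refine ⟨⟨β * (β - α)⁻¹, - α * (β - α)⁻¹, ?_⟩, ⟨(β - α)⁻¹, -(β - α)⁻¹, ?_⟩⟩
        · rw [hLs, hLs]
          have : (β - α) * (β - α)⁻¹ = 1 := mul_inv_cancel₀ h
          calc a = ((β - α) * (β - α)⁻¹) • a := by rw [this, one_smul]
            _ = _ := by module
        · rw [hLs, hLs]
          have : (β - α) * (β - α)⁻¹ = 1 := mul_inv_cancel₀ h
          calc b = ((β - α) * (β - α)⁻¹) • b := by rw [this, one_smul]
            _ = _ := by module
    intro l m hlm n
    obtain ⟨⟨x, y, h1⟩, ⟨x', y', h2⟩⟩ := key l m hlm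
    rcases n with _ | ν
    · exact ⟨x', y', h2⟩
    · refine ⟨x - ν * x', y - ν * y', ?_⟩
      rw [hLs]
      conv_lhs => rw [h1, h2]
      module
  have hcop : ∀ l m p, Prime p → p ∣ L l → p ∣ L m → l = m := by
    intro l m p hp hl hm
    by_contra hlm
    have hall : ∀ n, p ∣ L n := by
      intro n
      obtain ⟨x, y, h⟩ := hlin l m hlm n
      rw [h]
      exact dvd_add (dvd_smul_of_dvd x hl) (dvd_smul_of_dvd y hm)
    have h1 : p ∣ a := by
      have := hall (some 0)
      rwa [hLs, zero_smul, sub_zero] at this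
    exact hp.not_isUnit (hrel h1 (hall none))
  refine ⟨g, L, ?_, hne, ?_, hcop, hlin, ?_⟩
  · rintro (_ | α)
    · exact hbg
    · exact Submodule.sub_mem _ hag (Submodule.smul_mem _ _ hbg)
  · rintro rfl
    obtain ⟨x, hx⟩ := hB0 a hag
    obtain ⟨y, hy⟩ := hB0 b hbg
    apply htc (x / y)
    apply Subtype.ext
    change (t : FractionRing B) = algebraMap K (FractionRing B) (x / y)
    rw [htab, hx, hy, map_div₀, ← IsScalarTower.algebraMap_apply, ← IsScalarTower.algebraMap_apply]
  · intro h f f' hf hf' hf0 hf0'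
    let e : gr0 𝒜 := ⟨algebraMap B (FractionRing B) f / algebraMap B (FractionRing B) f',
      (mem_gr0 𝒜 _).2 ⟨h, f, hf, f', hf', hf0', rfl⟩⟩
    obtain ⟨P, Q, hQ, hPQ⟩ := ht e
    have hfF : algebraMap B (FractionRing B) f ≠ 0 := by simpa using hf0
    have hfF' : algebraMap B (FractionRing B) f' ≠ 0 := by simpa using hf0'
    have hPQ' := congrArg (gr0 𝒜).val hPQ
    have hQ' : (gr0 𝒜).val (Polynomial.aeval t Q) ≠ 0 := by
      intro h; apply hQ; exact Subtype.ext h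
    rw [map_mul, ← Polynomial.aeval_algHom_apply, ← Polynomial.aeval_algHom_apply] at hPQ'
    rw [← Polynomial.aeval_algHom_apply] at hQ'
    change (algebraMap B (FractionRing B) f / algebraMap B (FractionRing B) f') *
      Polynomial.aeval (t : FractionRing B) Q = Polynomial.aeval (t : FractionRing B) P at hPQ'
    change Polynomial.aeval (t : FractionRing B) Q ≠ 0 at hQ'
    rw [htab] at hPQ' hQ'
    obtain ⟨R, hR⟩ := aeval_split _ _ hbF P
    obtain ⟨R', hR'⟩ := aeval_split _ _ hbF Q
    have hQ0 : Q.leadingCoeff ≠ 0 := by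
      intro h
      rw [Polynomial.leadingCoeff_eq_zero] at h
      rw [h, map_zero] at hQ'
      exact hQ' rfl
    have hP0 : P.leadingCoeff ≠ 0 := by
      intro h
      rw [Polynomial.leadingCoeff_eq_zero] at h
      rw [h, map_zero] at hPQ'
      exact mul_ne_zero (div_ne_zero hfF hfF') hQ' hPQ'
    have hmap : ∀ R : Multiset K, (R.map fun α => algebraMap B (FractionRing B) a -
        algebraMap K (FractionRing B) α * algebraMap B (FractionRing B) b).prod =
        algebraMap B (FractionRing B) ((R.map some).map L).prod := by
      intro R
      rw [map_multiset_prod, Multiset.map_map, Multiset.map_map]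
      congr 1
      apply Multiset.map_congr rfl
      intro α _
      simp only [Function.comp, hLs, Algebra.smul_def, map_sub, map_mul]
      rw [IsScalarTower.algebraMap_apply K B]
    rw [hmap] at hR hR'
    refine ⟨R.map some + Multiset.replicate R'.card none, R'.map some + Multiset.replicate R.card none,
      by simp [add_comm], P.leadingCoeff / Q.leadingCoeff, div_ne_zero hP0 hQ0, ?_⟩
    rw [Multiset.map_add, Multiset.prod_add, Multiset.map_add, Multiset.prod_add,
      Multiset.map_replicate, Multiset.prod_replicate, Multiset.map_replicate, Multiset.prod_replicate, hLn]
    apply hinjB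
    rw [Algebra.smul_def]
    simp only [map_mul, map_pow]
    rw [← IsScalarTower.algebraMap_apply, map_div₀]
    have hq : algebraMap K (FractionRing B) Q.leadingCoeff ≠ 0 := by simpa using hQ0
    rw [div_mul_eq_mul_div, div_eq_iff hfF'] at hPQ'
    rw [div_mul_eq_mul_div, eq_div_iff hq]
    linear_combination (algebraMap B (FractionRing B) b)^(R.card+R'.card) * hPQ' - algebraMap B (FractionRing B) f * algebraMap B (FractionRing B) b ^ R.card * hR' + algebraMap B (FractionRing B) f' * algebraMap B (FractionRing B) b ^ R'.card * hR
end PencilPart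



section ValPart
variable {B : Type*} [CommRing B] [IsDomain B] [UniqueFactorizationMonoid B]

theorem fm {p x : B} (hp : Prime p) (hx : x ≠ 0) : FiniteMultiplicity p x :=
  FiniteMultiplicity.of_not_isUnit hp.not_isUnit hx

theorem v_mul {p x y : B} (hp : Prime p) (hx : x ≠ 0) (hy : y ≠ 0) :
    multiplicity p (x * y) = multiplicity p x + multiplicity p y :=
  multiplicity_mul hp (fm hp (mul_ne_zero hx hy))

theorem v_zero {p x : B} (h : ¬ p ∣ x) : multiplicity p x = 0 :=
  multiplicity_eq_zero.2 h

theorem v_pos {p x : B} (hp : Prime p) (hx : x ≠ 0) (h : p ∣ x) : 0 < multiplicity p x := by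
  rw [Nat.pos_iff_ne_zero]
  intro h0
  exact multiplicity_eq_zero.1 h0 h

theorem v_unit {p x : B} (hp : Prime p) (hx : IsUnit x) : multiplicity p x = 0 :=
  v_zero fun h => hp.not_isUnit (isUnit_of_dvd_unit h hx)

theorem v_pow {p x : B} (hp : Prime p) (hx : x ≠ 0) (n : ℕ) :
    multiplicity p (x ^ n) = n * multiplicity p x := by
  induction n with
  | zero => rw [pow_zero, zero_mul, v_unit hp isUnit_one]
  | succ n ih => rw [pow_succ, v_mul hp (pow_ne_zero _ hx) hx, ih]; ring

theorem v_assoc {p q x : B} (h : Associated p q) : multiplicity p x = multiplicity q x :=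
  multiplicity_eq_of_associated_left h.symm

theorem v_self {p q : B} (hp : Prime p) (h : Associated p q) : multiplicity p q = 1 := by
  obtain ⟨u, rfl⟩ := h
  rw [v_mul hp hp.ne_zero u.ne_zero, v_unit hp u.isUnit]
  rw [multiplicity_self]

theorem v_ne {p q : B} (hp : Prime p) (hq : Prime q) (h : ¬ Associated p q) :
    multiplicity p q = 0 :=
  v_zero fun hd => h (hp.associated_of_dvd hq hd)

theorem v_pow_dvd {p x : B} {n : ℕ} (hp : Prime p) (hx : x ≠ 0) (h : n ≤ multiplicity p x) : p ^ n ∣ x :=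
  pow_dvd_of_le_multiplicity h

theorem v_mset {ι : Type*} {p : B} (hp : Prime p) (L : ι → B) (hL : ∀ l, L l ≠ 0) (S : Multiset ι) :
    multiplicity p (S.map L).prod = (S.map fun l => multiplicity p (L l)).sum := by
  induction S using Multiset.induction_on with
  | empty => simp [v_unit hp isUnit_one]
  | cons a s ih =>
    rw [Multiset.map_cons, Multiset.prod_cons, Multiset.map_cons, Multiset.sum_cons,
      v_mul hp (hL a) ?_, ih]
    rw [Ne, Multiset.prod_eq_zero_iff, Multiset.mem_map]
    rintro ⟨l, _, h⟩
    exact hL l h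

theorem v_mset_of {ι : Type*} [DecidableEq ι] {p : B} (hp : Prime p) (L : ι → B) (hL : ∀ l, L l ≠ 0)
    (l : ι) (h : ∀ m, p ∣ L m → m = l) (S : Multiset ι) :
    multiplicity p (S.map L).prod = S.count l * multiplicity p (L l) := by
  rw [v_mset hp L hL]
  induction S using Multiset.induction_on with
  | empty => simp
  | cons a s ih =>
    rw [Multiset.map_cons, Multiset.sum_cons, ih, Multiset.count_cons]
    by_cases ha : l = a
    · subst ha; simp; ring
    · rw [v_zero fun hd => ha (h a hd).symm]; simp [ha]

theorem v_fprod {V : Type*} {p : B} (hp : Prime p) (t : V → B) (ht : ∀ v, t v ≠ 0) (e : V →₀ ℕ) :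
    multiplicity p (e.prod fun v n => t v ^ n) = e.sum fun v n => n * multiplicity p (t v) := by
  classical
  induction e using Finsupp.induction with
  | zero => simp [v_unit hp isUnit_one]
  | single_add a b f ha hb ih =>
    rw [Finsupp.prod_add_index' (by simp) (by intros; rw [pow_add]),
      Finsupp.sum_add_index' (by simp) (by intros; rw [add_mul]), v_mul hp, ih,
      Finsupp.prod_single_index (by simp), Finsupp.sum_single_index (by simp), v_pow hp (ht a)]
    · rw [Finsupp.prod_single_index (by simp)]; exact pow_ne_zero _ (ht a)
    · exact Finset.prod_ne_zero_iff.2 fun j _ => pow_ne_zero _ (ht j)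

theorem v_fprod_self {V : Type*} (t : V → B) (ht : ∀ v, Prime (t v))
    (hna : ∀ v w, Associated (t v) (t w) → v = w) (e : V →₀ ℕ) (v : V) :
    multiplicity (t v) (e.prod fun v n => t v ^ n) = e v := by
  classical
  rw [v_fprod (ht v) t (fun v => (ht v).ne_zero)]
  rw [Finsupp.sum, Finset.sum_eq_single v]
  · rw [v_self (ht v) (Associated.refl _), mul_one]
  · intro w _ hw
    rw [v_ne (ht v) (ht w) fun h => hw (hna _ _ h).symm, mul_zero]
  · intro h; rw [Finsupp.notMem_support_iff.1 h, zero_mul]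

theorem v_fprod_none {V : Type*} {p : B} (hp : Prime p) (t : V → B) (ht : ∀ v, Prime (t v))
    (hna : ∀ v, ¬ Associated p (t v)) (e : V →₀ ℕ) :
    multiplicity p (e.prod fun v n => t v ^ n) = 0 := by
  classical
  rw [v_fprod hp t (fun v => (ht v).ne_zero)]
  exact Finset.sum_eq_zero fun w _ => by simp [v_ne hp (ht w) (hna w)]

theorem dvd_of_v {a b : B} (hb : b ≠ 0) (ha : a ≠ 0)
    (h : ∀ p, Prime p → multiplicity p a ≤ multiplicity p b) : a ∣ b := by
  induction a using UniqueFactorizationMonoid.induction_on_prime generalizing b with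
  | h₁ => exact absurd rfl ha
  | h₂ x hx => exact hx.dvd
  | h₃ a p ha0 hp ih =>
    have h1 := h p hp
    rw [v_mul hp hp.ne_zero ha0, v_self hp (Associated.refl _)] at h1
    obtain ⟨c, rfl⟩ := dvd_of_multiplicity_pos (a := p) (b := b) (by omega)
    have hc : c ≠ 0 := right_ne_zero_of_mul hb
    refine mul_dvd_mul_left p (ih hc ha0 fun q hq => ?_)
    have h2 := h q hq
    rw [v_mul hq hp.ne_zero ha0, v_mul hq hp.ne_zero hc] at h2
    omega

theorem assoc_of_v {a b : B} (hb : b ≠ 0) (ha : a ≠ 0)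
    (h : ∀ p, Prime p → multiplicity p a = multiplicity p b) : Associated a b :=
  associated_of_dvd_dvd (dvd_of_v hb ha fun p hp => (h p hp).le)
    (dvd_of_v ha hb fun p hp => (h p hp).ge)

theorem exists_root_v {q : ℕ} (hq : 0 < q) {b : B} (hb : b ≠ 0)
    (h : ∀ p, Prime p → q ∣ multiplicity p b) : ∃ A : B, Associated (A ^ q) b := by
  have hwf : WellFounded (DvdNotUnit : B → B → Prop) := wellFounded_dvdNotUnit
  induction b using hwf.induction with
  | _ b ih =>
  by_cases hu : IsUnit b
  · exact ⟨1, by rw [one_pow]; exact (associated_one_iff_isUnit.2 hu).symm⟩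
  obtain ⟨p, hp', hpb⟩ := WfDvdMonoid.exists_irreducible_factor hu hb
  have hp := hp'.prime
  have hle : q ≤ multiplicity p b := Nat.le_of_dvd (v_pos hp hb hpb) (h p hp)
  obtain ⟨c, rfl⟩ := v_pow_dvd hp hb hle
  have hc : c ≠ 0 := right_ne_zero_of_mul hb
  have hpq : p ^ q ≠ 0 := pow_ne_zero _ hp.ne_zero
  obtain ⟨A, hA⟩ := ih c ⟨hc, p ^ q, fun h => hp.not_isUnit ((isUnit_pow_iff hq.ne').1 h), mul_comm _ _⟩
    hc fun r hr => by
      have := h r hr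
      rw [v_mul hr hpq hc, v_pow hr hp.ne_zero] at this
      exact (Nat.dvd_add_right (Dvd.intro _ rfl)).1 this
  exact ⟨p * A, by rw [mul_pow]; exact hA.mul_left _⟩

theorem exists_prime_dvd {b : B} (hb : b ≠ 0) (hu : ¬ IsUnit b) : ∃ p, Prime p ∧ p ∣ b := by
  obtain ⟨p, hp, h⟩ := WfDvdMonoid.exists_irreducible_factor hu hb
  exact ⟨p, hp.prime, h⟩

end ValPart



section PencilCons
variable {K : Type*} [Field K] {B : Type*} [CommRing B] [IsDomain B] [Algebra K B]
  [UniqueFactorizationMonoid B] {d : ℕ}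
  {𝒜 : (Fin d → ℤ) → Submodule K B} [GradedAlgebra 𝒜] {g : Fin d → ℤ} {L : Option K → B}

theorem unit_alg {c : K} (hc : c ≠ 0) : IsUnit (algebraMap K B c) := (IsUnit.mk0 c hc).map _

theorem Pencil.KLv [DecidableEq (Option K)] (P : Pencil 𝒜 g L) {h f f'} (hf : f ∈ 𝒜 h) (hf' : f' ∈ 𝒜 h) (hf0 : f ≠ 0)
    (hf0' : f' ≠ 0) : ∃ S S' : Multiset (Option K), S.card = S'.card ∧
      (∀ l p, Prime p → p ∣ L l → multiplicity p f + S'.count l * multiplicity p (L l) =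
        multiplicity p f' + S.count l * multiplicity p (L l)) ∧
      (∀ p, Prime p → (∀ l, ¬ p ∣ L l) → multiplicity p f = multiplicity p f') := by
  obtain ⟨S, S', hc, c, hc0, h⟩ := P.KL h f f' hf hf' hf0 hf0'
  have hS : ∀ S : Multiset (Option K), (S.map L).prod ≠ 0 := by
    intro S
    rw [Ne, Multiset.prod_eq_zero_iff, Multiset.mem_map]
    rintro ⟨l, _, h⟩
    exact P.ne l h
  have hu : IsUnit (algebraMap K B c) := unit_alg hc0
  have key : ∀ p, Prime p → multiplicity p f + multiplicity p (S'.map L).prod =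
      multiplicity p f' + multiplicity p (S.map L).prod := by
    intro p hp
    have := congrArg (multiplicity p) h
    rwa [Algebra.smul_def, v_mul hp hf0 (hS _), v_mul hp hu.ne_zero (mul_ne_zero hf0' (hS _)),
      v_mul hp hf0' (hS _), v_unit hp hu, zero_add] at this
  refine ⟨S, S', hc, ?_, ?_⟩
  · intro l p hp hpl
    have := key p hp
    rwa [v_mset_of hp L P.ne l (fun m hm => P.cop _ _ p hp hm hpl),
      v_mset_of hp L P.ne l (fun m hm => P.cop _ _ p hp hm hpl)] at this
  · intro p hp hn
    have := key p hp
    rwa [v_mset_of hp L P.ne none (fun m hm => absurd hm (hn m)),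
      v_mset_of hp L P.ne none (fun m hm => absurd hm (hn m)), v_zero (hn none),
      mul_zero, mul_zero, add_zero, add_zero] at this

theorem Pencil.finite (P : Pencil 𝒜 g L) {J : Type*} (p : J → B) (hp : ∀ j, Prime (p j))
    (deg : J → Fin d → ℤ) (hdeg : ∀ j, p j ∈ 𝒜 (deg j))
    (hna : ∀ i j, Associated (p i) (p j) → i = j)
    (hcond : ∀ j l, p j ∣ L l → ∃ p', Prime p' ∧ p' ∣ L l ∧ ∀ i, ¬ Associated p' (p i)) :
    Finite J := by
  classical
  have hli : LinearIndependent ℕ deg := by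
    intro e e' hee
    have m1 := gr_prod 𝒜 p deg hdeg e
    have m2 := gr_prod 𝒜 p deg hdeg e'
    rw [← hee] at m2
    have hne : ∀ e : J →₀ ℕ, (e.prod fun b n => p b ^ n) ≠ 0 := fun e =>
      Finset.prod_ne_zero_iff.2 fun j _ => pow_ne_zero _ (hp j).ne_zero
    obtain ⟨S, S', hc, h1, h2⟩ := P.KLv m1 m2 (hne _) (hne _)
    ext j
    by_cases hj : ∀ l, ¬ p j ∣ L l
    · have := h2 _ (hp j) hj
      rwa [v_fprod_self p hp hna, v_fprod_self p hp hna] at this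
    · push Not at hj
      obtain ⟨l, hl⟩ := hj
      obtain ⟨p', hp', hpl', hna'⟩ := hcond j l hl
      have h3 := h1 l p' hp' hpl'
      rw [v_fprod_none hp' p hp hna', v_fprod_none hp' p hp hna', zero_add, zero_add] at h3
      have h4 := Nat.eq_of_mul_eq_mul_right (v_pos hp' (P.ne l) hpl') h3
      have h5 := h1 l _ (hp j) hl
      rw [v_fprod_self p hp hna, v_fprod_self p hp hna, h4] at h5
      omega
  exact (linInd_int_of_nat deg hli).finite

theorem Pencil.not_unit (P : Pencil 𝒜 g L)
    (hunmixed : ∀ g : Fin d → ℤ, 𝒜 g ≠ ⊥ → 𝒜 (-g) ≠ ⊥ → g = 0)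
    (hB0 : ∀ b ∈ 𝒜 (0 : Fin d → ℤ), ∃ c : K, b = algebraMap K B c) (l) : ¬ IsUnit (L l) := by
  intro hu
  obtain ⟨c, hc, h⟩ := gr_unit 𝒜 hunmixed hB0 hu
  have h1 : L l ∈ 𝒜 0 := by rw [h]; exact SetLike.algebraMap_mem_graded 𝒜 c
  exact P.g0 (DirectSum.degree_eq_of_mem_mem 𝒜 (P.mem l) h1 (P.ne l))

theorem Pencil.exists_prime (P : Pencil 𝒜 g L)
    (hunmixed : ∀ g : Fin d → ℤ, 𝒜 g ≠ ⊥ → 𝒜 (-g) ≠ ⊥ → g = 0)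
    (hB0 : ∀ b ∈ 𝒜 (0 : Fin d → ℤ), ∃ c : K, b = algebraMap K B c) (l) : ∃ p, Prime p ∧ p ∣ L l :=
  exists_prime_dvd (P.ne l) (P.not_unit hunmixed hB0 l)

theorem smul_deg (q : ℕ) (hq : 0 < q) (i j : Fin d → ℤ) (h : q • i = q • j) : i = j := by
  funext x
  have := congrFun h x
  simp only [Pi.smul_apply, nsmul_eq_mul] at this
  exact mul_left_cancel₀ (by exact_mod_cast hq.ne') this

theorem Pencil.gcd [IsAlgClosed K] (P : Pencil 𝒜 g L)
    (hunmixed : ∀ g : Fin d → ℤ, 𝒜 g ≠ ⊥ → 𝒜 (-g) ≠ ⊥ → g = 0)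
    (hB0 : ∀ b ∈ 𝒜 (0 : Fin d → ℤ), ∃ c : K, b = algebraMap K B c) {l m} (hlm : l ≠ m)
    {q : ℕ} (hq : 2 ≤ q) (hl : ∀ p, Prime p → q ∣ multiplicity p (L l))
    (hm : ∀ p, Prime p → q ∣ multiplicity p (L m)) : False := by
  classical
  have hq0 : 0 < q := by omega
  have root : ∀ l, (∀ p, Prime p → q ∣ multiplicity p (L l)) → ∃ A i, A ^ q = L l ∧ A ∈ 𝒜 i ∧
      q • i = g := by
    intro l hl
    obtain ⟨A, u, hA⟩ := exists_root_v hq0 (P.ne l) hl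
    obtain ⟨c, hc, h⟩ := gr_unit 𝒜 hunmixed hB0 u.isUnit
    obtain ⟨z, hz⟩ := IsAlgClosed.exists_pow_nat_eq c hq0
    have hAz : (A * algebraMap K B z) ^ q = L l := by
      rw [mul_pow, ← map_pow, hz, ← h, hA]
    obtain ⟨i, hi⟩ := gr_dvd 𝒜 (P.mem l) (P.ne l) (f := A * algebraMap K B z)
      (by rw [← hAz]; exact dvd_pow_self _ hq0.ne')
    refine ⟨_, i, hAz, hi, ?_⟩
    have h2 : L l ∈ 𝒜 (q • i) := by rw [← hAz]; exact SetLike.pow_mem_graded q hi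
    exact DirectSum.degree_eq_of_mem_mem 𝒜 h2 (P.mem l) (P.ne l)
  obtain ⟨A, i, hA, hAi, hi⟩ := root l hl
  obtain ⟨C, j, hC, hCj, hj⟩ := root m hm
  obtain rfl : i = j := smul_deg q hq0 i j (hi.trans hj.symm)
  have hA0 : A ≠ 0 := by rintro rfl; exact P.ne l (by rw [← hA, zero_pow hq0.ne'])
  have hC0 : C ≠ 0 := by rintro rfl; exact P.ne m (by rw [← hC, zero_pow hq0.ne'])
  obtain ⟨S, S', -, h1, -⟩ := P.KLv hAi hCj hA0 hC0
  obtain ⟨p, hp, hpl⟩ := P.exists_prime hunmixed hB0 l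
  have h2 := h1 l p hp hpl
  have h3 : multiplicity p C = 0 := by
    apply v_zero
    intro h
    apply hlm
    apply P.cop l m p hp hpl
    rw [← hC]; exact dvd_pow h hq0.ne'
  have h4 : multiplicity p A ≠ 0 := by
    intro h
    rw [multiplicity_eq_zero] at h
    rw [← hA] at hpl
    exact h (hp.dvd_of_dvd_pow hpl)
  rw [h3, ← hA, v_pow hp hA0, zero_add] at h2
  have h5 : (1 + S'.count l * q) * multiplicity p A = (S.count l * q) * multiplicity p A := by
    linarith
  have h6 := Nat.eq_of_mul_eq_mul_right (Nat.pos_of_ne_zero h4) h5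
  have h7 : q ∣ 1 := (Nat.dvd_add_left (Dvd.intro_left (S'.count l) rfl)).1
    (h6 ▸ Dvd.intro_left _ rfl)
  have := Nat.le_of_dvd one_pos h7
  omega

theorem Pencil.finite_nonprime [IsAlgClosed K] (P : Pencil 𝒜 g L)
    (hunmixed : ∀ g : Fin d → ℤ, 𝒜 g ≠ ⊥ → 𝒜 (-g) ≠ ⊥ → g = 0)
    (hB0 : ∀ b ∈ 𝒜 (0 : Fin d → ℤ), ∃ c : K, b = algebraMap K B c) :
    {l | ¬ Prime (L l)}.Finite := by
  classical
  let Ea : Set (Option K) := {l | ∃ p p', Prime p ∧ Prime p' ∧ p ∣ L l ∧ p' ∣ L l ∧ ¬ Associated p' p}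
  let Eb : Set (Option K) := {l | ∃ m, 2 ≤ m ∧ (∃ i, m • i = g) ∧
    ∀ p, Prime p → m ∣ multiplicity p (L l)}
  have ha : Ea.Finite := by
    choose! p p' hp hp' hd hd' hna using (fun l (hl : l ∈ Ea) => hl)
    choose! deg hdeg using fun l (hl : l ∈ Ea) => gr_dvd 𝒜 (P.mem l) (P.ne l) (hd l hl)
    have : Finite Ea := by
      apply P.finite (fun l : Ea => p l) (fun l => hp l l.2) (fun l => deg l) (fun l => hdeg l l.2)
      · intro i j h
        apply Subtype.ext
        exact P.cop _ _ (p i) (hp _ i.2) (hd _ i.2) (h.dvd.trans (hd _ j.2))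
      · intro j l hl
        have : (j : Option K) = l := P.cop _ _ _ (hp _ j.2) (hd _ j.2) hl
        subst this
        refine ⟨p' j, hp' _ j.2, hd' _ j.2, ?_⟩
        intro i h
        have : (i : Option K) = j := P.cop _ _ (p i) (hp _ i.2) (hd _ i.2) (h.symm.dvd.trans (hd' _ j.2))
        apply hna _ j.2
        rwa [← this] at h ⊢
    exact Set.toFinite Ea
  have hb : Eb.Finite := by
    obtain ⟨x, hx⟩ := Function.ne_iff.1 P.g0
    choose! m hm2 hmg hm using (fun l (hl : l ∈ Eb) => hl)
    apply Set.Finite.of_finite_image (f := m)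
    · apply (Nat.divisors (g x).natAbs).finite_toSet.subset
      rintro _ ⟨l, hl, rfl⟩
      obtain ⟨i, hi⟩ := hmg l hl
      simp only [Finset.mem_coe, Nat.mem_divisors]
      refine ⟨?_, by simpa using hx⟩
      have := congrFun hi x
      simp only [Pi.smul_apply, nsmul_eq_mul] at this
      rw [← this, Int.natAbs_mul, Int.natAbs_natCast]
      exact Dvd.intro _ rfl
    · intro l hl l' hl' h
      by_contra hne
      refine P.gcd hunmixed hB0 hne (hm2 l hl) (hm l hl) ?_
      rw [h]
      exact hm l' hl'
  refine (ha.union hb).subset ?_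
  intro l hl
  by_cases hla : l ∈ Ea
  · exact Or.inl hla
  right
  obtain ⟨p, hp, hpl⟩ := P.exists_prime hunmixed hB0 l
  have hall : ∀ p', Prime p' → p' ∣ L l → Associated p' p := by
    intro p' hp' hd'
    by_contra h
    exact hla ⟨p, p', hp, hp', hpl, hd', h⟩
  have hvp := v_pos hp (P.ne l) hpl
  have hass : Associated (p ^ (multiplicity p (L l))) (L l) := by
    apply assoc_of_v (P.ne l) (pow_ne_zero _ hp.ne_zero)
    intro q hq
    rw [v_pow hq hp.ne_zero]
    by_cases hqp : Associated q p
    · rw [v_self hq hqp, mul_one, v_assoc hqp]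
    · rw [v_ne hq hp hqp, mul_zero, v_zero fun h => hqp (hall q hq h)]
  refine ⟨multiplicity p (L l), ?_, ?_, ?_⟩
  · by_contra h
    have h1 : multiplicity p (L l) = 1 := by omega
    rw [h1, pow_one] at hass
    exact hl (hass.prime hp)
  · obtain ⟨i, hi⟩ := gr_dvd 𝒜 (P.mem l) (P.ne l) hpl
    refine ⟨i, ?_⟩
    obtain ⟨u, hu⟩ := hass
    obtain ⟨c, hc, h⟩ := gr_unit 𝒜 hunmixed hB0 u.isUnit
    have h2 : L l ∈ 𝒜 (multiplicity p (L l) • i + 0) := by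
      rw [← hu, h]
      refine SetLike.mul_mem_graded ?_ (SetLike.algebraMap_mem_graded 𝒜 c)
      rw [← h, hu]
      exact SetLike.pow_mem_graded _ hi
    rw [add_zero] at h2
    exact DirectSum.degree_eq_of_mem_mem 𝒜 h2 (P.mem l) (P.ne l)
  · intro q hq
    by_cases hqp : Associated q p
    · rw [v_assoc hqp]
    · rw [v_zero fun h => hqp (hall q hq h)]; exact dvd_zero _

end PencilCons



section SysPart

theorem fin_val_one' {r : ℕ} (hr : 1 ≤ r) : ((1 : Fin (r + 1)) : ℕ) = 1 := by
  obtain ⟨r, rfl⟩ := Nat.exists_eq_add_of_le' hr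
  simp

theorem fin_zero_ne_one' {r : ℕ} (hr : 1 ≤ r) : (0 : Fin (r + 1)) ≠ 1 := by
  intro h
  have := congrArg Fin.val h
  rw [fin_val_one' hr] at this
  simp at this

theorem fin_cases' {r : ℕ} (hr : 1 ≤ r) (i : Fin (r + 1)) : i = 0 ∨ i = 1 ∨ 2 ≤ (i : ℕ) := by
  by_cases h0 : (i : ℕ) = 0
  · left; exact Fin.ext h0
  by_cases h1 : (i : ℕ) = 1
  · right; left; exact Fin.ext (h1.trans (fin_val_one' hr).symm)
  · right; right; omega

variable {K : Type*} [Field K] {B : Type*} [CommRing B] [IsDomain B] [Algebra K B]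
  [UniqueFactorizationMonoid B] {d : ℕ}
  {𝒜 : (Fin d → ℤ) → Submodule K B} [GradedAlgebra 𝒜] {g : Fin d → ℤ} {L : Option K → B}

/-- system of homogeneous prime generators adapted to a pencil -/
structure Sys (𝒜 : (Fin d → ℤ) → Submodule K B) (L : Option K → B) (r m : ℕ)
    (σ : Fin (r + 1) → Option K) (n : Fin (r + 1) → ℕ)
    (t : (Fin m ⊕ Σ i, Fin (n i)) → B) : Prop where
  prime : ∀ v, Prime (t v)
  hom : ∀ v, ∃ h, t v ∈ 𝒜 h
  na : ∀ v w, Associated (t v) (t w) → v = w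
  free : ∀ v l, ¬ t (Sum.inl v) ∣ L l
  dv : ∀ i j, t (Sum.inr ⟨i, j⟩) ∣ L (σ i)
  inj : Function.Injective σ
  covf : ∀ p h, Prime p → p ∈ 𝒜 h → (∀ l, ¬ p ∣ L l) → ∃ v, Associated p (t (Sum.inl v))
  covd : ∀ p i, Prime p → p ∣ L (σ i) → ∃ j, Associated p (t (Sum.inr ⟨i, j⟩))
  cove : ∀ l, l ∉ Set.range σ → Prime (L l)

theorem Sys.rescale {r m : ℕ} {σ : Fin (r + 1) → Option K} {n : Fin (r + 1) → ℕ}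
    {t : (Fin m ⊕ Σ i, Fin (n i)) → B} (Y : Sys 𝒜 L r m σ n t)
    (s : (Fin m ⊕ Σ i, Fin (n i)) → K) (hs : ∀ v, s v ≠ 0) :
    Sys 𝒜 L r m σ n (fun v => s v • t v) := by
  have ha : ∀ v, Associated (t v) (s v • t v) := by
    intro v
    rw [Algebra.smul_def, mul_comm]
    exact (associated_mul_isUnit_right_iff (unit_alg (hs v))).2 (Associated.refl _)
  refine ⟨fun v => (ha v).prime (Y.prime v), ?_, ?_, ?_, ?_, Y.inj, ?_, ?_, Y.cove⟩
  · intro v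
    obtain ⟨h, hh⟩ := Y.hom v
    exact ⟨h, Submodule.smul_mem _ _ hh⟩
  · intro v w h
    exact Y.na _ _ ((ha v).trans (h.trans (ha w).symm))
  · intro v l h
    exact Y.free v l ((ha _).dvd.trans h)
  · intro i j
    exact (ha _).symm.dvd.trans (Y.dv i j)
  · intro p h hp hph hn
    obtain ⟨v, hv⟩ := Y.covf p h hp hph hn
    exact ⟨v, hv.trans (ha _)⟩
  · intro p i hp hpi
    obtain ⟨j, hj⟩ := Y.covd p i hp hpi
    exact ⟨j, hj.trans (ha _)⟩

theorem exists_sys (P : Pencil 𝒜 g L) {r : ℕ} (σ : Fin (r + 1) → Option K)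
    (hσ : Function.Injective σ) (hE : {l | ¬ Prime (L l)} ⊆ Set.range σ) :
    ∃ m n t, Sys 𝒜 L r m σ n t := by
  classical
  let F : Set (Associates B) := {c | ∃ p h, Prime p ∧ p ∈ 𝒜 h ∧ (∀ l, ¬ p ∣ L l) ∧ Associates.mk p = c}
  let D : Fin (r + 1) → Set (Associates B) := fun i => {c | ∃ p, Prime p ∧ p ∣ L (σ i) ∧ Associates.mk p = c}
  choose pf hf hpf hfh hfn hfa using fun c : F => c.2
  have hF : Finite F := by
    apply P.finite pf hpf hf hfh
    · intro i j h
      apply Subtype.ext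
      rw [← hfa i, ← hfa j]
      exact Associates.mk_eq_mk_iff_associated.2 h
    · intro j l h
      exact absurd h (hfn j l)
  have hD : ∀ i, Finite (D i) := by
    intro i
    apply Set.Finite.to_subtype
    apply ((UniqueFactorizationMonoid.factors (L (σ i))).map Associates.mk).toFinset.finite_toSet.subset
    rintro c ⟨p, hp, hpi, rfl⟩
    obtain ⟨q, hq, hpq⟩ := UniqueFactorizationMonoid.exists_mem_factors_of_dvd (P.ne _) hp.irreducible hpi
    simp only [Finset.mem_coe, Multiset.mem_toFinset, Multiset.mem_map]
    exact ⟨q, hq, (Associates.mk_eq_mk_iff_associated.2 hpq).symm⟩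
  choose pd hpd hdd hda using fun i (c : D i) => c.2
  obtain ⟨m, ⟨ef⟩⟩ := Finite.exists_equiv_fin F
  choose n hn using fun i => Finite.exists_equiv_fin (D i)
  let ed : ∀ i, D i ≃ Fin (n i) := fun i => (hn i).some
  let t : (Fin m ⊕ Σ i, Fin (n i)) → B := fun v =>
    Sum.elim (fun v => pf (ef.symm v)) (fun v => pd v.1 ((ed v.1).symm v.2)) v
  refine ⟨m, n, t, ?_, ?_, ?_, ?_, ?_, hσ, ?_, ?_, ?_⟩
  · rintro (v | v)
    · exact hpf _
    · exact hpd _ _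
  · rintro (v | v)
    · exact ⟨_, hfh _⟩
    · exact gr_dvd 𝒜 (P.mem (σ v.1)) (P.ne _) (hdd _ _)
  · rintro (v | ⟨i, v⟩) (w | ⟨j, w⟩) h
    · congr 1
      apply ef.symm.injective
      apply Subtype.ext
      rw [← hfa, ← hfa]
      exact Associates.mk_eq_mk_iff_associated.2 h
    · exact absurd (h.dvd.trans (hdd _ _)) (hfn _ _)
    · exact absurd (h.symm.dvd.trans (hdd _ _)) (hfn _ _)
    · have hij : i = j := hσ (P.cop _ _ _ (hpd _ _) (hdd i ((ed i).symm v)) (h.dvd.trans (hdd _ _)))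
      subst hij
      congr 2
      apply (ed i).symm.injective
      apply Subtype.ext
      rw [← hda, ← hda]
      exact Associates.mk_eq_mk_iff_associated.2 h
  · intro v l
    exact hfn _ _
  · intro i j
    exact hdd _ _
  · intro p h hp hph hn
    refine ⟨ef ⟨Associates.mk p, p, h, hp, hph, hn, rfl⟩, ?_⟩
    simp only [t, Sum.elim_inl, Equiv.symm_apply_apply]
    exact (Associates.mk_eq_mk_iff_associated.1 (hfa _)).symm
  · intro p i hp hpi
    refine ⟨ed i ⟨Associates.mk p, p, hp, hpi, rfl⟩, ?_⟩
    simp only [t, Sum.elim_inr, Equiv.symm_apply_apply]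
    exact (Associates.mk_eq_mk_iff_associated.1 (hda _ _)).symm
  · intro l hl
    by_contra h
    exact hl (hE h)

variable {r m : ℕ} {σ : Fin (r + 1) → Option K} {n : Fin (r + 1) → ℕ}
    {t : (Fin m ⊕ Σ i, Fin (n i)) → B}

theorem Sys.n_pos (P : Pencil 𝒜 g L)
    (hunmixed : ∀ g : Fin d → ℤ, 𝒜 g ≠ ⊥ → 𝒜 (-g) ≠ ⊥ → g = 0)
    (hB0 : ∀ b ∈ 𝒜 (0 : Fin d → ℤ), ∃ c : K, b = algebraMap K B c)
    (Y : Sys 𝒜 L r m σ n t) (i) : 1 ≤ n i := by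
  obtain ⟨p, hp, hpl⟩ := P.exists_prime hunmixed hB0 (σ i)
  obtain ⟨j, _⟩ := Y.covd p i hp hpl
  have := j.2
  omega

/-- exponents -/
noncomputable def bet (L : Option K → B) (σ : Fin (r + 1) → Option K)
    (t : (Fin m ⊕ Σ i, Fin (n i)) → B) (i : Fin (r + 1)) (j : Fin (n i)) : ℕ :=
  multiplicity (t (Sum.inr ⟨i, j⟩)) (L (σ i))

theorem Sys.bet_pos (P : Pencil 𝒜 g L) (Y : Sys 𝒜 L r m σ n t) (i j) : 0 < bet L σ t i j :=
  v_pos (Y.prime _) (P.ne _) (Y.dv i j)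

theorem Sys.assocL (P : Pencil 𝒜 g L) (Y : Sys 𝒜 L r m σ n t) (i) :
    Associated (∏ j, t (Sum.inr ⟨i, j⟩) ^ bet L σ t i j) (L (σ i)) := by
  classical
  have h0 : ∀ v, t v ≠ 0 := fun v => (Y.prime v).ne_zero
  have hv : ∀ q, Prime q → multiplicity q (∏ j, t (Sum.inr ⟨i, j⟩) ^ bet L σ t i j) =
      ∑ j, bet L σ t i j * multiplicity q (t (Sum.inr ⟨i, j⟩)) := by
    intro q hq
    have := v_fprod hq (fun j => t (Sum.inr ⟨i, j⟩)) (fun j => h0 _) (Finsupp.equivFunOnFinite.symm (bet L σ t i))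
    rw [Finsupp.prod_fintype _ _ (by simp), Finsupp.sum_fintype _ _ (by simp)] at this
    simpa using this
  apply assoc_of_v (P.ne _) (Finset.prod_ne_zero_iff.2 fun j _ => pow_ne_zero _ (h0 _))
  intro q hq
  rw [hv q hq]
  by_cases hqd : q ∣ L (σ i)
  · obtain ⟨j, hj⟩ := Y.covd q i hq hqd
    rw [Finset.sum_eq_single j]
    · rw [v_self hq hj, mul_one, bet, v_assoc hj]
    · intro j' _ hj'
      rw [v_ne hq (Y.prime _), mul_zero]
      intro h
      apply hj'
      have := Y.na _ _ (hj.symm.trans h)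
      simpa using this.symm
    · simp
  · rw [v_zero hqd]
    refine Finset.sum_eq_zero fun j _ => ?_
    rw [v_ne hq (Y.prime _), mul_zero]
    intro h
    exact hqd (h.dvd.trans (Y.dv i j))

theorem Sys.eqL (P : Pencil 𝒜 g L)
    (hunmixed : ∀ g : Fin d → ℤ, 𝒜 g ≠ ⊥ → 𝒜 (-g) ≠ ⊥ → g = 0)
    (hB0 : ∀ b ∈ 𝒜 (0 : Fin d → ℤ), ∃ c : K, b = algebraMap K B c)
    (Y : Sys 𝒜 L r m σ n t) (i) : ∃ c : K, c ≠ 0 ∧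
    L (σ i) = c • (∏ j, t (Sum.inr ⟨i, j⟩) ^ bet L σ t i j) := by
  obtain ⟨u, hu⟩ := Y.assocL P i
  obtain ⟨c, hc, h⟩ := gr_unit 𝒜 hunmixed hB0 u.isUnit
  exact ⟨c, hc, by rw [← hu, h, Algebra.smul_def, mul_comm]⟩

theorem Sys.gen (P : Pencil 𝒜 g L) (hr : 1 ≤ r)
    (hunmixed : ∀ g : Fin d → ℤ, 𝒜 g ≠ ⊥ → 𝒜 (-g) ≠ ⊥ → g = 0)
    (hB0 : ∀ b ∈ 𝒜 (0 : Fin d → ℤ), ∃ c : K, b = algebraMap K B c)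
    (Y : Sys 𝒜 L r m σ n t) (A : Subalgebra K B) (hA : ∀ v, t v ∈ A) (b : B) : b ∈ A := by
  classical
  have hL1 : ∀ i, L (σ i) ∈ A := by
    intro i
    obtain ⟨c, hc, h⟩ := Y.eqL P hunmixed hB0 i
    rw [h]
    exact A.smul_mem (A.prod_mem fun j _ => A.pow_mem (hA _) _) c
  have h01 : σ 0 ≠ σ 1 := fun h => fin_zero_ne_one' hr (Y.inj h)
  have hL : ∀ l, L l ∈ A := by
    intro l
    obtain ⟨x, y, h⟩ := P.lin _ _ h01 l
    rw [h]
    exact A.add_mem (A.smul_mem (hL1 _) _) (A.smul_mem (hL1 _) _)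
  have hass : ∀ p q : B, Associated p q → q ∈ A → p ∈ A := by
    intro p q h hq
    obtain ⟨u, rfl⟩ := h.symm
    obtain ⟨c, hc, h⟩ := gr_unit 𝒜 hunmixed hB0 u.isUnit
    rw [h]
    exact A.mul_mem hq (A.algebraMap_mem c)
  have hprime : ∀ p h, Prime p → p ∈ 𝒜 h → p ∈ A := by
    intro p h hp hph
    by_cases hd : ∀ l, ¬ p ∣ L l
    · obtain ⟨v, hv⟩ := Y.covf p h hp hph hd
      exact hass _ _ hv (hA _)
    · push Not at hd
      obtain ⟨l, hl⟩ := hd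
      by_cases hlr : l ∈ Set.range σ
      · obtain ⟨i, rfl⟩ := hlr
        obtain ⟨j, hj⟩ := Y.covd p i hp hl
        exact hass _ _ hj (hA _)
      · exact hass _ _ (hp.associated_of_dvd (Y.cove l hlr) hl) (hL l)
  have hhom : ∀ b h, b ∈ 𝒜 h → b ∈ A := by
    intro b
    induction b using UniqueFactorizationMonoid.induction_on_prime with
    | h₁ => intro h _; exact A.zero_mem
    | h₂ x hx =>
      intro h _
      obtain ⟨c, hc, h⟩ := gr_unit 𝒜 hunmixed hB0 hx
      rw [h]; exact A.algebraMap_mem c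
    | h₃ a p ha hp ih =>
      intro h hb
      obtain ⟨i, j, -, hi, hj⟩ := gr_mul 𝒜 hb (mul_ne_zero hp.ne_zero ha)
      exact A.mul_mem (hprime p i hp hi) (ih j hj)
  rw [← DirectSum.sum_support_decompose 𝒜 b]
  exact A.sum_mem fun i _ => hhom _ i (SetLike.coe_mem _)

end SysPart



section LIPart

/-- standard exponents -/
def Std {r m : ℕ} {n : Fin (r + 1) → ℕ} (β : (i : Fin (r + 1)) → Fin (n i) → ℕ)
    (e : (Fin m ⊕ Σ i, Fin (n i)) →₀ ℕ) : Prop :=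
  ∀ i : Fin (r + 1), 2 ≤ (i : ℕ) → ∃ j, e (Sum.inr ⟨i, j⟩) < β i j

variable {K : Type*} [Field K] {B : Type*} [CommRing B] [IsDomain B] [Algebra K B]
  [UniqueFactorizationMonoid B] {d : ℕ}
  {𝒜 : (Fin d → ℤ) → Submodule K B} [GradedAlgebra 𝒜] {g : Fin d → ℤ} {L : Option K → B}
  {r m : ℕ} {σ : Fin (r + 1) → Option K} {n : Fin (r + 1) → ℕ}
    {t : (Fin m ⊕ Σ i, Fin (n i)) → B}

theorem val_LI {ι : Type*} {p : B} (hp : Prime p) (s : Finset ι) (x : ι → B) (hx : ∀ i ∈ s, x i ≠ 0)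
    (hinj : Set.InjOn (fun i => multiplicity p (x i)) s) (c : ι → K) (hsum : ∑ i ∈ s, c i • x i = 0) :
    ∀ i ∈ s, c i = 0 := by
  classical
  by_contra! hcon
  obtain ⟨i0, hi0, hc0⟩ := hcon
  let s' := s.filter fun i => c i ≠ 0
  have hne : s'.Nonempty := ⟨i0, Finset.mem_filter.2 ⟨hi0, hc0⟩⟩
  obtain ⟨i, hi, hmin⟩ := s'.exists_min_image (fun i => multiplicity p (x i)) hne
  have his := (Finset.mem_filter.1 hi).1
  have hic := (Finset.mem_filter.1 hi).2
  have hd : p ^ (multiplicity p (x i) + 1) ∣ c i • x i := by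
    rw [← Finset.add_sum_erase s _ his] at hsum
    rw [eq_neg_of_add_eq_zero_left hsum, dvd_neg]
    apply Finset.dvd_sum
    intro j hj
    have hj' := Finset.mem_erase.1 hj
    by_cases hcj : c j = 0
    · rw [hcj, zero_smul]; exact dvd_zero _
    · apply dvd_smul_of_dvd
      apply v_pow_dvd hp (hx j hj'.2)
      have h1 := hmin j (Finset.mem_filter.2 ⟨hj'.2, hcj⟩)
      have h2 : multiplicity p (x i) ≠ multiplicity p (x j) := fun h => hj'.1 (hinj hj'.2 his h.symm)
      omega
  have hd2 : p ^ (multiplicity p (x i) + 1) ∣ x i := by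
    have := dvd_smul_of_dvd (c i)⁻¹ hd
    rwa [smul_smul, inv_mul_cancel₀ hic, one_smul] at this
  have := (fm hp (hx i his)).le_multiplicity_of_pow_dvd hd2
  omega

theorem mset_count [DecidableEq (Option K)] (S S' : Multiset (Option K)) (hc : S.card = S'.card)
    (a : Option K) (h : ∀ l, l ≠ a → S.count l = S'.count l) : S.count a = S'.count a := by
  have h1 : S.filter (· ≠ a) = S'.filter (· ≠ a) := by
    ext l
    rw [Multiset.count_filter, Multiset.count_filter]
    split_ifs with hl
    · exact h l hl
    · rfl
  have h2 := Multiset.filter_add_not (· ≠ a) S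
  have h3 := Multiset.filter_add_not (· ≠ a) S'
  rw [← h2, ← h3, Multiset.card_add, Multiset.card_add, h1] at hc
  simp only [not_not, Multiset.filter_eq', Multiset.card_replicate] at hc
  omega

theorem Sys.inj_std (P : Pencil 𝒜 g L) (hr : 1 ≤ r)
    (hunmixed : ∀ g : Fin d → ℤ, 𝒜 g ≠ ⊥ → 𝒜 (-g) ≠ ⊥ → g = 0)
    (hB0 : ∀ b ∈ 𝒜 (0 : Fin d → ℤ), ∃ c : K, b = algebraMap K B c)
    (Y : Sys 𝒜 L r m σ n t) (j0 : Fin (n 0)) (e e' : (Fin m ⊕ Σ i, Fin (n i)) →₀ ℕ)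
    (he : Std (bet L σ t) e) (he' : Std (bet L σ t) e') (h : Fin d → ℤ)
    (hh : (e.prod fun v a => t v ^ a) ∈ 𝒜 h) (hh' : (e'.prod fun v a => t v ^ a) ∈ 𝒜 h)
    (h0 : e (Sum.inr ⟨0, j0⟩) = e' (Sum.inr ⟨0, j0⟩)) : e = e' := by
  classical
  have hne : ∀ e : (Fin m ⊕ Σ i, Fin (n i)) →₀ ℕ, (e.prod fun b n => t b ^ n) ≠ 0 := fun e =>
      Finset.prod_ne_zero_iff.2 fun j _ => pow_ne_zero _ (Y.prime j).ne_zero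
  obtain ⟨S, S', hc, h1, h2⟩ := P.KLv hh hh' (hne _) (hne _)
  have h1' : ∀ i j, e (Sum.inr ⟨i, j⟩) + S'.count (σ i) * bet L σ t i j =
      e' (Sum.inr ⟨i, j⟩) + S.count (σ i) * bet L σ t i j := by
    intro i j
    have := h1 (σ i) _ (Y.prime (Sum.inr ⟨i, j⟩)) (Y.dv i j)
    rwa [v_fprod_self t Y.prime Y.na, v_fprod_self t Y.prime Y.na] at this
  have hcount : ∀ l, l ≠ σ 1 → S.count l = S'.count l := by
    intro l hl
    by_cases hlr : l ∈ Set.range σ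
    · obtain ⟨i, rfl⟩ := hlr
      rcases fin_cases' hr i with rfl | rfl | hi
      · have := h1' 0 j0
        rw [h0] at this
        exact Nat.eq_of_mul_eq_mul_right (Y.bet_pos P 0 j0) (Nat.add_left_cancel this).symm
      · exact absurd rfl hl
      · rcases lt_trichotomy (S.count (σ i)) (S'.count (σ i)) with hlt | heq | hlt
        · obtain ⟨j, hj⟩ := he' i hi
          have := h1' i j
          nlinarith
        · exact heq
        · obtain ⟨j, hj⟩ := he i hi
          have := h1' i j
          nlinarith
    · obtain ⟨p, hp, hpl⟩ := P.exists_prime hunmixed hB0 l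
      have hn : ∀ v, ¬ Associated p (t v) := by
        rintro (v | ⟨i, j⟩) h
        · exact Y.free v l (h.symm.dvd.trans hpl)
        · exact hlr ⟨i, P.cop _ _ p hp (h.dvd.trans (Y.dv i j)) hpl⟩
      have := h1 l p hp hpl
      rw [v_fprod_none hp t Y.prime hn, v_fprod_none hp t Y.prime hn, zero_add, zero_add] at this
      exact (Nat.eq_of_mul_eq_mul_right (v_pos hp (P.ne l) hpl) this).symm
  have hall : ∀ l, S.count l = S'.count l := by
    intro l
    by_cases hl : l = σ 1
    · rw [hl]; exact mset_count S S' hc _ hcount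
    · exact hcount l hl
  ext v
  rcases v with v | ⟨i, j⟩
  · have := h2 _ (Y.prime (Sum.inl v)) (Y.free v)
    rwa [v_fprod_self t Y.prime Y.na, v_fprod_self t Y.prime Y.na] at this
  · have := h1' i j
    rw [hall] at this
    omega

theorem Sys.LI (P : Pencil 𝒜 g L) (hr : 1 ≤ r)
    (hunmixed : ∀ g : Fin d → ℤ, 𝒜 g ≠ ⊥ → 𝒜 (-g) ≠ ⊥ → g = 0)
    (hB0 : ∀ b ∈ 𝒜 (0 : Fin d → ℤ), ∃ c : K, b = algebraMap K B c)
    (Y : Sys 𝒜 L r m σ n t) :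
    LinearIndependent K (fun e : {e : (Fin m ⊕ Σ i, Fin (n i)) →₀ ℕ // Std (bet L σ t) e} =>
      e.1.prod fun v a => t v ^ a) := by
  classical
  choose deg hdeg using Y.hom
  have j0 : Fin (n 0) := ⟨0, Y.n_pos P hunmixed hB0 0⟩
  have hne : ∀ e : (Fin m ⊕ Σ i, Fin (n i)) →₀ ℕ, (e.prod fun b n => t b ^ n) ≠ 0 := fun e =>
      Finset.prod_ne_zero_iff.2 fun j _ => pow_ne_zero _ (Y.prime j).ne_zero
  let D : {e : (Fin m ⊕ Σ i, Fin (n i)) →₀ ℕ // Std (bet L σ t) e} → Fin d → ℤ :=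
    fun e => Finsupp.linearCombination ℕ deg e.1
  have hD : ∀ e, (e.1.prod fun v a => t v ^ a) ∈ 𝒜 (D e) := fun e => gr_prod 𝒜 t deg hdeg e.1
  rw [linearIndependent_iff']
  intro s c hsum i hi
  have h1 := gr_indep 𝒜 (s.image D) (fun h => ∑ e ∈ s with D e = h, c e • (e.1.prod fun v a => t v ^ a)) id
    (by
      intro h _
      refine Submodule.sum_mem _ fun e he => Submodule.smul_mem _ _ ?_
      have := hD e
      rwa [(Finset.mem_filter.1 he).2] at this)
    (Function.injective_id.injOn)
    (by
      rw [Finset.sum_fiberwise_of_maps_to (fun e he => Finset.mem_image_of_mem D he)]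
      exact hsum) (D i) (Finset.mem_image_of_mem D hi)
  refine val_LI (Y.prime (Sum.inr ⟨0, j0⟩)) _ _ (fun e _ => hne e.1) ?_ c h1 i
    (Finset.mem_filter.2 ⟨hi, rfl⟩)
  intro e he e' he' hee
  simp only [Finset.coe_filter, Set.mem_setOf_eq] at he he'
  simp only [v_fprod_self t Y.prime Y.na] at hee
  apply Subtype.ext
  refine Y.inj_std P hr hunmixed hB0 j0 e.1 e'.1 e.2 e'.2 (D i) ?_ ?_ hee
  · rw [← he.2]; exact hD e
  · rw [← he'.2]; exact hD e'

end LIPart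

section Spanning
variable {K : Type*} [Field K] {W : Type*} [CommRing W] [Algebra K W] {r m : ℕ} {n : Fin (r + 1) → ℕ}

/-- the exponent of the `i`th monomial -/
noncomputable def bexp {r m : ℕ} {n : Fin (r + 1) → ℕ} (β : (i : Fin (r + 1)) → Fin (n i) → ℕ)
    (i : Fin (r + 1)) : (Fin m ⊕ Σ i, Fin (n i)) →₀ ℕ :=
  ∑ j, Finsupp.single (Sum.inr ⟨i, j⟩) (β i j)

theorem prod_bexp (β : (i : Fin (r + 1)) → Fin (n i) → ℕ) (w : (Fin m ⊕ Σ i, Fin (n i)) → W)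
    (i : Fin (r + 1)) : ((bexp β i).prod fun v a => w v ^ a) = ∏ j, w (Sum.inr ⟨i, j⟩) ^ β i j := by
  classical
  rw [bexp, ← Finsupp.prod_finset_sum_index (by simp) (by intros; rw [pow_add])]
  exact Finset.prod_congr rfl fun j _ => Finsupp.prod_single_index (by simp)

theorem bexp_le (β : (i : Fin (r + 1)) → Fin (n i) → ℕ) (e : (Fin m ⊕ Σ i, Fin (n i)) →₀ ℕ)
    (i : Fin (r + 1)) (h : ∀ j, β i j ≤ e (Sum.inr ⟨i, j⟩)) : bexp β i ≤ e := by
  classical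
  intro v
  rw [bexp, Finsupp.finset_sum_apply]
  rcases v with v | ⟨i', j'⟩
  · simp
  · by_cases hi : i' = i
    · subst hi
      rw [Finset.sum_eq_single j']
      · simpa using h j'
      · intro j _ hj
        rw [Finsupp.single_apply, if_neg]
        simpa using hj
      · simp
    · rw [Finset.sum_eq_zero]
      · exact Nat.zero_le _
      · intro j _
        rw [Finsupp.single_apply, if_neg]
        intro h
        apply hi
        have := Sum.inr.inj h
        exact (congrArg Sigma.fst this).symm

theorem span_std (hr : 1 ≤ r) (β : (i : Fin (r + 1)) → Fin (n i) → ℕ) (hβ : ∀ i j, 0 < β i j)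
    (hn : ∀ i, 1 ≤ n i)
    (w : (Fin m ⊕ Σ i, Fin (n i)) → W) (hw : Algebra.adjoin K (Set.range w) = ⊤)
    (hrel : ∀ i : Fin (r + 1), 2 ≤ (i : ℕ) → ∃ x y : K, ∏ j, w (Sum.inr ⟨i, j⟩) ^ β i j =
      x • (∏ j, w (Sum.inr ⟨0, j⟩) ^ β 0 j) + y • (∏ j, w (Sum.inr ⟨1, j⟩) ^ β 1 j)) :
    Submodule.span K (Set.range (fun e : {e : (Fin m ⊕ Σ i, Fin (n i)) →₀ ℕ // Std β e} =>
      e.1.prod fun v a => w v ^ a)) = ⊤ := by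
  classical
  let ω : ((Fin m ⊕ Σ i, Fin (n i)) →₀ ℕ) →ₗ[ℕ] ℕ := Finsupp.linearCombination ℕ
    (fun v => Sum.elim (fun _ => 0) (fun v => if 2 ≤ (v.1 : ℕ) then 1 else 0) v)
  have hω : ∀ i, ω (bexp β i) = if 2 ≤ (i : ℕ) then ∑ j, β i j else 0 := by
    intro i
    simp only [ω, bexp, map_sum, Finsupp.linearCombination_single, Sum.elim_inr]
    split_ifs <;> simp
  have hmon : ∀ N, ∀ e : (Fin m ⊕ Σ i, Fin (n i)) →₀ ℕ, ω e = N → (e.prod fun v a => w v ^ a) ∈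
      Submodule.span K (Set.range (fun e : {e : (Fin m ⊕ Σ i, Fin (n i)) →₀ ℕ // Std β e} =>
      e.1.prod fun v a => w v ^ a)) := by
    intro N
    induction N using Nat.strong_induction_on with
    | _ N ih =>
    intro e he
    by_cases hs : Std β e
    · exact Submodule.subset_span ⟨⟨e, hs⟩, rfl⟩
    · unfold Std at hs
      push Not at hs
      obtain ⟨i, hi, hle⟩ := hs
      obtain ⟨e1, rfl⟩ := le_iff_exists_add'.1 (bexp_le β e i hle)
      obtain ⟨x, y, hxy⟩ := hrel i hi
      have hadd : ∀ e e' : (Fin m ⊕ Σ i, Fin (n i)) →₀ ℕ, ((e + e').prod fun v a => w v ^ a) =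
          (e.prod fun v a => w v ^ a) * (e'.prod fun v a => w v ^ a) := fun e e' =>
        Finsupp.prod_add_index' (by simp) (by intros; rw [pow_add])
      rw [hadd, prod_bexp, hxy, mul_add, mul_smul_comm, mul_smul_comm, ← prod_bexp β w 0,
        ← prod_bexp β w 1, ← hadd, ← hadd]
      have hpos : 0 < ∑ j, β i j :=
        Finset.sum_pos (fun j _ => hβ i j) ⟨⟨0, hn i⟩, Finset.mem_univ _⟩
      rw [map_add, hω, if_pos hi] at he
      have h1 := fin_val_one' hr
      refine Submodule.add_mem _ (Submodule.smul_mem _ _ ?_) (Submodule.smul_mem _ _ ?_)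
      · refine ih _ ?_ _ rfl
        rw [map_add, hω, if_neg (by simp)]
        omega
      · refine ih _ ?_ _ rfl
        rw [map_add, hω, if_neg (by omega)]
        omega
  rw [eq_top_iff]
  rintro z -
  have hz : z ∈ Algebra.adjoin K (Set.range w) := by rw [hw]; trivial
  rw [Algebra.adjoin_range_eq_range_aeval] at hz
  obtain ⟨p, rfl⟩ := hz
  change aeval w p ∈ _
  rw [p.as_sum, map_sum]
  refine Submodule.sum_mem _ fun e _ => ?_
  rw [aeval_monomial, ← Algebra.smul_def]
  exact Submodule.smul_mem _ _ (hmon _ e rfl)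

theorem inj_of_span_LI {M N ι : Type*} [AddCommGroup M] [AddCommGroup N] [Module K M] [Module K N]
    (f : M →ₗ[K] N) (v : ι → M) (hs : Submodule.span K (Set.range v) = ⊤)
    (hli : LinearIndependent K (fun i => f (v i))) : Function.Injective f := by
  rw [← LinearMap.ker_eq_bot, eq_bot_iff]
  intro z hz
  have hz' : z ∈ Submodule.span K (Set.range v) := by rw [hs]; trivial
  rw [Finsupp.mem_span_range_iff_exists_finsupp] at hz'
  obtain ⟨c, rfl⟩ := hz'
  have h1 : Finsupp.linearCombination K (fun i => f (v i)) c = 0 := by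
    have : f (c.sum fun i a => a • v i) = 0 := hz
    rw [map_finsuppSum] at this
    rw [Finsupp.linearCombination_apply, ← this]
    simp
  rw [linearIndependent_iff] at hli
  rw [hli c h1]
  simp

end Spanning



section FinalPart
variable {K : Type*} [Field K] {B : Type*} [CommRing B] [IsDomain B] [Algebra K B]
  [UniqueFactorizationMonoid B] {d : ℕ}
  {𝒜 : (Fin d → ℤ) → Submodule K B} [GradedAlgebra 𝒜] {g : Fin d → ℤ} {L : Option K → B}

theorem Sys.iso {r m : ℕ} {σ : Fin (r + 1) → Option K} {n : Fin (r + 1) → ℕ}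
    {t : (Fin m ⊕ Σ i, Fin (n i)) → B} (P : Pencil 𝒜 g L) (hr : 1 ≤ r)
    (hunmixed : ∀ g : Fin d → ℤ, 𝒜 g ≠ ⊥ → 𝒜 (-g) ≠ ⊥ → g = 0)
    (hB0 : ∀ b ∈ 𝒜 (0 : Fin d → ℤ), ∃ c : K, b = algebraMap K B c)
    (Y : Sys 𝒜 L r m σ n t) {W : Type*} [CommRing W] [Algebra K W]
    (w : (Fin m ⊕ Σ i, Fin (n i)) → W) (hw : Algebra.adjoin K (Set.range w) = ⊤)
    (hrel : ∀ i : Fin (r + 1), 2 ≤ (i : ℕ) → ∃ x y : K, ∏ j, w (Sum.inr ⟨i, j⟩) ^ bet L σ t i j =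
      x • (∏ j, w (Sum.inr ⟨0, j⟩) ^ bet L σ t 0 j) + y • (∏ j, w (Sum.inr ⟨1, j⟩) ^ bet L σ t 1 j))
    (Φ : W →ₐ[K] B) (hΦ : ∀ v, Φ (w v) = t v) : Nonempty (B ≃ₐ[K] W) := by
  have hspan := span_std hr (bet L σ t) (Y.bet_pos P) (Y.n_pos P hunmixed hB0) w hw hrel
  have hli := Y.LI P hr hunmixed hB0
  have hinj : Function.Injective Φ := by
    refine inj_of_span_LI Φ.toLinearMap _ hspan ?_
    simpa only [AlgHom.toLinearMap_apply, Finsupp.prod, map_prod, map_pow, hΦ] using hli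
  have hsurj : Function.Surjective Φ := by
    intro b
    exact Y.gen P hr hunmixed hB0 Φ.range (fun v => ⟨w v, hΦ v⟩) b
  exact ⟨(AlgEquiv.ofBijective Φ ⟨hinj, hsurj⟩).symm⟩

/-- the variable with given indices -/
def mkVar (Δ : TrinomialData K) (i : Fin (Δ.r + 1)) (j : Fin (Δ.n i)) : Δ.Vars := ⟨i, j⟩

theorem mon_eq (Δ : TrinomialData K) (i : Fin (Δ.r + 1)) :
    Δ.mon i = ∏ j : Fin (Δ.n i), (X (mkVar Δ i j) : MvPolynomial Δ.Vars K) ^ Δ.β i j := rfl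

theorem tri_iso (Δ : TrinomialData K) {m : ℕ} {σ : Fin (Δ.r + 1) → Option K}
    {t : (Fin m ⊕ Σ i, Fin (Δ.n i)) → B} (P : Pencil 𝒜 g L)
    (hunmixed : ∀ g : Fin d → ℤ, 𝒜 g ≠ ⊥ → 𝒜 (-g) ≠ ⊥ → g = 0)
    (hB0 : ∀ b ∈ 𝒜 (0 : Fin d → ℤ), ∃ c : K, b = algebraMap K B c)
    (Y : Sys 𝒜 L Δ.r m σ Δ.n t) (hβ : Δ.β = bet L σ t)
    (hrel : ∀ i : Fin (Δ.r + 1), 2 ≤ (i : ℕ) → ∏ j, t (Sum.inr ⟨0, j⟩) ^ Δ.β 0 j +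
      Δ.lam i • (∏ j, t (Sum.inr ⟨1, j⟩) ^ Δ.β 1 j) + ∏ j, t (Sum.inr ⟨i, j⟩) ^ Δ.β i j = 0) :
    Nonempty (B ≃ₐ[K] MvPolynomial (Fin m) Δ.Ring) := by
  let f : MvPolynomial Δ.Vars K →ₐ[K] B := aeval (fun v : Δ.Vars => t (Sum.inr v))
  have hfmon : ∀ i, f (Δ.mon i) = ∏ j, t (Sum.inr ⟨i, j⟩) ^ Δ.β i j := by
    intro i
    rw [mon_eq, map_prod]
    refine Finset.prod_congr rfl fun j _ => ?_
    rw [map_pow]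
    congr 1
    exact aeval_X _ _
  have hf : ∀ a ∈ Δ.relIdeal, f a = 0 := by
    intro a ha
    have : Δ.relIdeal ≤ RingHom.ker f := by
      rw [TrinomialData.relIdeal, Ideal.span_le]
      rintro _ ⟨i, hi, rfl⟩
      change f _ = 0
      rw [map_add, map_add, map_mul, hfmon, hfmon, hfmon, ← hrel i hi, Algebra.smul_def]
      congr 3
      exact (algHom_C f _)
    exact this ha
  let φ : Δ.Ring →ₐ[K] B := Ideal.Quotient.liftₐ Δ.relIdeal f hf
  let Φ : MvPolynomial (Fin m) Δ.Ring →ₐ[K] B :=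
    { eval₂Hom (φ : Δ.Ring →+* B) (fun v => t (Sum.inl v)) with
      commutes' := by
        intro c
        change eval₂Hom (φ : Δ.Ring →+* B) (fun v => t (Sum.inl v)) (algebraMap K _ c) = _
        rw [IsScalarTower.algebraMap_apply K Δ.Ring (MvPolynomial (Fin m) Δ.Ring),
          MvPolynomial.algebraMap_eq, eval₂Hom_C]
        exact φ.commutes c }
  let w : (Fin m ⊕ Σ i, Fin (Δ.n i)) → MvPolynomial (Fin m) Δ.Ring :=
    fun v => Sum.elim (fun v => X v) (fun v => C (Ideal.Quotient.mk Δ.relIdeal (X (show Δ.Vars from v)))) v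
  have hΦC : ∀ a, Φ (C (Ideal.Quotient.mk Δ.relIdeal a)) = f a := by
    intro a
    change eval₂Hom (φ : Δ.Ring →+* B) (fun v => t (Sum.inl v)) (C _) = _
    rw [eval₂Hom_C]
    rfl
  have hwmon : ∀ i, ∏ j, w (Sum.inr ⟨i, j⟩) ^ Δ.β i j = C (Ideal.Quotient.mk Δ.relIdeal (Δ.mon i)) := by
    intro i
    rw [mon_eq, map_prod, map_prod]
    refine Finset.prod_congr rfl fun j _ => ?_
    rw [map_pow, map_pow]
    rfl
  refine Y.iso P Δ.one_le_r hunmixed hB0 w ?_ ?_ Φ ?_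
  · rw [eq_top_iff]
    rintro z -
    have hC : ∀ a : Δ.Ring, C a ∈ Algebra.adjoin K (Set.range w) := by
      intro a
      obtain ⟨a, rfl⟩ := Ideal.Quotient.mk_surjective a
      induction a using MvPolynomial.induction_on with
      | C c => exact Subalgebra.algebraMap_mem _ c
      | add p q hp hq => rw [map_add, map_add]; exact Subalgebra.add_mem _ hp hq
      | mul_X p v hp =>
        rw [map_mul, map_mul]
        exact Subalgebra.mul_mem _ hp (Algebra.subset_adjoin ⟨Sum.inr v, rfl⟩)
    induction z using MvPolynomial.induction_on with
    | C c => exact hC c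
    | add p q hp hq => exact Subalgebra.add_mem _ hp hq
    | mul_X p v hp => exact Subalgebra.mul_mem _ hp (Algebra.subset_adjoin ⟨Sum.inl v, rfl⟩)
  · intro i hi
    rw [← hβ]
    refine ⟨-1, - Δ.lam i, ?_⟩
    rw [hwmon, hwmon, hwmon]
    have h0 : Ideal.Quotient.mk Δ.relIdeal (Δ.mon 0 + C (Δ.lam i) * Δ.mon 1 + Δ.mon i) = 0 :=
      Ideal.Quotient.eq_zero_iff_mem.2 (Ideal.subset_span ⟨i, hi, rfl⟩)
    have h1 : Ideal.Quotient.mk Δ.relIdeal (Δ.mon i) = (-1 : K) • Ideal.Quotient.mk Δ.relIdeal (Δ.mon 0) +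
        (- Δ.lam i) • Ideal.Quotient.mk Δ.relIdeal (Δ.mon 1) := by
      rw [map_add, map_add] at h0
      rw [eq_neg_of_add_eq_zero_right h0, neg_smul, one_smul, neg_smul, neg_add,
        ← MvPolynomial.smul_eq_C_mul]
      congr 2
    have hCs : ∀ (a : K) (x : Δ.Ring),
        (C (a • x) : MvPolynomial (Fin m) Δ.Ring) = a • C x := fun a x =>
      map_smul (IsScalarTower.toAlgHom K Δ.Ring (MvPolynomial (Fin m) Δ.Ring)) a x
    rw [h1, map_add, hCs, hCs]
  · rintro (v | v)
    · change eval₂Hom (φ : Δ.Ring →+* B) (fun v => t (Sum.inl v)) (X v) = _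
      rw [eval₂Hom_X']
    · change Φ (C (Ideal.Quotient.mk Δ.relIdeal (X (show Δ.Vars from v)))) = _
      rw [hΦC]
      exact aeval_X _ _

/-- trivial trinomial data -/
def triv (K : Type*) [Field K] : TrinomialData K where
  r := 1
  one_le_r := le_refl _
  n := fun _ => 1
  one_le_n := fun _ => le_refl _
  two_le_total := by simp
  β := fun _ _ => 1
  β_pos := fun _ _ => Nat.one_pos
  gcd_coprime := by intro i j _; simp
  lam := fun _ => 0
  lam_ne_zero := by intro i hi; have := i.2; omega
  lam_injOn := by intro i j hi; have := i.2; omega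

theorem triv_rel : (triv K).relIdeal = ⊥ := by
  rw [TrinomialData.relIdeal, Ideal.span_eq_bot]
  rintro _ ⟨i, hi, _⟩
  have : (i : ℕ) < 1 + 1 := i.2
  omega

theorem triv_iso (V : Type) [Fintype V] (hV : 2 ≤ Fintype.card V) :
    ∃ m : ℕ, Nonempty (MvPolynomial V K ≃ₐ[K] MvPolynomial (Fin m) (triv K).Ring) := by
  have e1 : (triv K).Ring ≃ₐ[K] MvPolynomial (triv K).Vars K :=
    (Ideal.quotientEquivAlgOfEq K triv_rel).trans (AlgEquiv.quotientBot K _)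
  letI : Fintype (triv K).Vars := inferInstanceAs (Fintype (Σ i : Fin 2, Fin 1))
  have hc : Fintype.card (triv K).Vars = 2 := by
    change Fintype.card (Σ i : Fin 2, Fin 1) = 2
    simp
  have e2 : V ≃ Fin (Fintype.card V - 2) ⊕ (triv K).Vars := Fintype.equivOfCardEq (by
    rw [Fintype.card_sum, hc, Fintype.card_fin]; omega)
  exact ⟨_, ⟨((renameEquiv K e2).trans (sumAlgEquiv K _ _)).trans (mapAlgEquiv _ e1.symm)⟩⟩

theorem bet_rescale {r m : ℕ} {σ : Fin (r + 1) → Option K} {n : Fin (r + 1) → ℕ}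
    (t : (Fin m ⊕ Σ i, Fin (n i)) → B) (s : (Fin m ⊕ Σ i, Fin (n i)) → K) (hs : ∀ v, s v ≠ 0) :
    bet L σ (fun v => s v • t v) = bet L σ t := by
  funext i j
  apply v_assoc
  change Associated (s _ • t _) (t _)
  rw [Algebra.smul_def, mul_comm]
  exact (associated_mul_isUnit_left_iff (unit_alg (hs _))).2 (Associated.refl _)

theorem exists_scale [IsAlgClosed K] {r m : ℕ} {n : Fin (r + 1) → ℕ} (hn : ∀ i, 1 ≤ n i)
    (β : (i : Fin (r + 1)) → Fin (n i) → ℕ) (hβ : ∀ i j, 0 < β i j) (κ : Fin (r + 1) → K)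
    (hκ : ∀ i, κ i ≠ 0) : ∃ s : (Fin m ⊕ Σ i, Fin (n i)) → K, (∀ v, s v ≠ 0) ∧
      ∀ i, ∏ j, s (Sum.inr ⟨i, j⟩) ^ β i j = κ i := by
  classical
  choose z hz using fun i => IsAlgClosed.exists_pow_nat_eq (κ i) (hβ i ⟨0, hn i⟩)
  have hz0 : ∀ i, z i ≠ 0 := by
    intro i h
    have := hz i
    rw [h, zero_pow (hβ _ _).ne'] at this
    exact hκ i this.symm
  refine ⟨Sum.elim (fun _ => 1) (fun v => if v.2 = ⟨0, hn v.1⟩ then z v.1 else 1), ?_, ?_⟩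
  · rintro (v | v)
    · exact one_ne_zero
    · simp only [Sum.elim_inr]
      split_ifs
      · exact hz0 _
      · exact one_ne_zero
  · intro i
    rw [← hz i, Finset.prod_eq_single ⟨0, hn i⟩]
    · simp
    · intro j _ hj
      simp [hj]
    · simp

theorem case_big [IsAlgClosed K] (P : Pencil 𝒜 g L) {r : ℕ} (hr : 2 ≤ r)
    (hunmixed : ∀ g : Fin d → ℤ, 𝒜 g ≠ ⊥ → 𝒜 (-g) ≠ ⊥ → g = 0)
    (hB0 : ∀ b ∈ 𝒜 (0 : Fin d → ℤ), ∃ c : K, b = algebraMap K B c)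
    (σ : Fin (r + 1) → Option K) (hσ : Function.Injective σ) (hE : {l | ¬ Prime (L l)} = Set.range σ) :
    ∃ Δ : TrinomialData K, Δ.Reduced ∧ ∃ m : ℕ,
      Nonempty (B ≃ₐ[K] MvPolynomial (Fin m) Δ.Ring) := by
  classical
  obtain ⟨m, n, t, Y⟩ := exists_sys P σ hσ hE.le
  have hr1 : 1 ≤ r := by omega
  have hnp := Y.n_pos P hunmixed hB0
  have hbp := Y.bet_pos P
  let N : Fin (r + 1) → B := fun i => ∏ j, t (Sum.inr ⟨i, j⟩) ^ bet L σ t i j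
  choose c hc0 hc using Y.eqL P hunmixed hB0
  have hc' : ∀ i, L (σ i) = c i • N i := hc
  have hval1 := fin_val_one' hr1
  have hex : ∀ i : Fin (r + 1), ∃ a b : K, a ≠ 0 ∧ (2 ≤ (i : ℕ) → b ≠ 0 ∧ N i = a • N 0 + b • N 1) := by
    intro i
    by_cases hi : 2 ≤ (i : ℕ)
    · have h01 : σ 0 ≠ σ 1 := fun h => fin_zero_ne_one' hr1 (hσ h)
      have hi0 : σ i ≠ σ 0 := fun h => by
        have := congrArg Fin.val (hσ h); rw [Fin.val_zero] at this; omega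
      have hi1 : σ i ≠ σ 1 := fun h => by
        have := congrArg Fin.val (hσ h); omega
      obtain ⟨x, y, hxy⟩ := P.lin _ _ h01 (σ i)
      obtain ⟨p, hp, hpi⟩ := P.exists_prime hunmixed hB0 (σ i)
      have hdiv : ∀ (z : K) (b : B), z ≠ 0 → p ∣ z • b → p ∣ b := by
        intro z b hz h
        have := dvd_smul_of_dvd z⁻¹ h
        rwa [smul_smul, inv_mul_cancel₀ hz, one_smul] at this
      have hxy0 : x ≠ 0 ∧ y ≠ 0 := by
        constructor
        · rintro rfl
          rw [zero_smul, zero_add] at hxy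
          have hy : y ≠ 0 := by
            rintro rfl
            rw [zero_smul] at hxy
            exact P.ne _ hxy
          rw [hxy] at hpi
          exact hi1 (P.cop _ _ p hp (by rw [hxy]; exact hpi) (hdiv y _ hy hpi))
        · rintro rfl
          rw [zero_smul, add_zero] at hxy
          have hx : x ≠ 0 := by
            rintro rfl
            rw [zero_smul] at hxy
            exact P.ne _ hxy
          rw [hxy] at hpi
          exact hi0 (P.cop _ _ p hp (by rw [hxy]; exact hpi) (hdiv x _ hx hpi))
      refine ⟨(c i)⁻¹ * (x * c 0), (c i)⁻¹ * (y * c 1), ?_, fun _ => ⟨?_, ?_⟩⟩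
      · exact mul_ne_zero (inv_ne_zero (hc0 i)) (mul_ne_zero hxy0.1 (hc0 0))
      · exact mul_ne_zero (inv_ne_zero (hc0 i)) (mul_ne_zero hxy0.2 (hc0 1))
      · rw [hc' i, hc' 0, hc' 1] at hxy
        have := congrArg (fun z => (c i)⁻¹ • z) hxy
        simp only [smul_add, smul_smul, inv_mul_cancel₀ (hc0 i), one_smul] at this
        exact this
    · exact ⟨1, 1, one_ne_zero, fun h => absurd h hi⟩
  choose a b ha hab using hex
  obtain ⟨s, hs, hsp⟩ := exists_scale (m := m) hnp (bet L σ t) hbp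
    (fun i => if 2 ≤ (i : ℕ) then -(a i)⁻¹ else 1) (by
      intro i
      split_ifs
      · exact neg_ne_zero.2 (inv_ne_zero (ha i))
      · exact one_ne_zero)
  let t' : (Fin m ⊕ Σ i, Fin (n i)) → B := fun v => s v • t v
  have Y' : Sys 𝒜 L r m σ n t' := Y.rescale s hs
  have hbet : bet L σ t' = bet L σ t := bet_rescale t s hs
  have hN' : ∀ i, ∏ j, t' (Sum.inr ⟨i, j⟩) ^ bet L σ t' i j =
      (if 2 ≤ (i : ℕ) then -(a i)⁻¹ else 1 : K) • N i := by
    intro i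
    rw [hbet, ← hsp i]
    simp only [t', N, smul_pow, Finset.prod_smul]
  have hrel : ∀ i : Fin (r + 1), 2 ≤ (i : ℕ) → ∏ j, t' (Sum.inr ⟨0, j⟩) ^ bet L σ t' 0 j +
      (b i / a i) • (∏ j, t' (Sum.inr ⟨1, j⟩) ^ bet L σ t' 1 j) +
      ∏ j, t' (Sum.inr ⟨i, j⟩) ^ bet L σ t' i j = 0 := by
    intro i hi
    rw [hN', hN', hN', if_pos hi, if_neg (by simp), if_neg (by omega), (hab i hi).2, one_smul, one_smul,
      smul_add, smul_smul, smul_smul, neg_mul, inv_mul_cancel₀ (ha i), div_eq_mul_inv]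
    module
  let Δ : TrinomialData K :=
    { r := r
      one_le_r := hr1
      n := n
      one_le_n := hnp
      two_le_total := by
        calc 2 ≤ ∑ i : Fin (r + 1), 1 := by simp; omega
          _ ≤ ∑ i, n i := Finset.sum_le_sum fun i _ => hnp i
      β := bet L σ t'
      β_pos := Y'.bet_pos P
      gcd_coprime := by
        intro i j hij
        by_contra hcop
        set q := Nat.gcd (Finset.univ.gcd (bet L σ t' i)) (Finset.univ.gcd (bet L σ t' j)) with hq
        have hd : ∀ i', q ∣ Finset.univ.gcd (bet L σ t' i') → ∀ p, Prime p → q ∣ multiplicity p (L (σ i')) := by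
          intro i' hi' p hp
          by_cases hpd : p ∣ L (σ i')
          · obtain ⟨j', hj'⟩ := Y'.covd p i' hp hpd
            rw [v_assoc hj']
            exact hi'.trans (Finset.gcd_dvd (Finset.mem_univ j'))
          · rw [v_zero hpd]; exact dvd_zero _
        have hq0 : q ≠ 0 := by
          intro h0
          have h1 : q ∣ bet L σ t' i ⟨0, hnp i⟩ :=
            (Nat.gcd_dvd_left _ _).trans (Finset.gcd_dvd (Finset.mem_univ _))
          rw [h0, zero_dvd_iff] at h1
          exact (Y'.bet_pos P i ⟨0, hnp i⟩).ne' h1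
        have hq1 : q ≠ 1 := hcop
        exact P.gcd hunmixed hB0 (fun h => hij (hσ h)) (q := q) (by omega)
          (hd i (Nat.gcd_dvd_left _ _)) (hd j (Nat.gcd_dvd_right _ _))
      lam := fun i => b i / a i
      lam_ne_zero := fun i hi => div_ne_zero (hab i hi).1 (ha i)
      lam_injOn := by
        intro i j hi hj h
        have h1 := hrel i hi
        have h2 := hrel j hj
        rw [h, ← h2] at h1
        have h3 := add_left_cancel h1
        obtain ⟨p, hp, hpi⟩ := P.exists_prime hunmixed hB0 (σ i)
        apply hσ
        apply P.cop _ _ p hp hpi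
        have h4 := hpi.trans (Y'.assocL P i).symm.dvd
        rw [h3] at h4
        exact h4.trans (Y'.assocL P j).dvd }
  refine ⟨Δ, Or.inr ⟨hr, ?_⟩, m, tri_iso Δ P hunmixed hB0 Y' rfl hrel⟩
  intro i
  by_contra hlt
  have hlt' : ∑ j, bet L σ t' i j < 2 := not_le.1 hlt
  have h1 : n i ≤ ∑ j, bet L σ t' i j := by
    calc n i = ∑ j : Fin (n i), 1 := by simp
      _ ≤ _ := Finset.sum_le_sum fun j _ => Y'.bet_pos P i j
  have h2 : n i = 1 := by have := hnp i; omega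
  have hsub : Subsingleton (Fin (n i)) := by rw [h2]; infer_instance
  have h3 := Y'.assocL P i
  rw [Fintype.prod_subsingleton _ ⟨0, hnp i⟩] at h3
  rw [Fintype.sum_subsingleton _ ⟨0, hnp i⟩] at hlt'
  have h4 := Y'.bet_pos P i ⟨0, hnp i⟩
  have h5 : bet L σ t' i ⟨0, hnp i⟩ = 1 := by omega
  rw [h5, pow_one] at h3
  have h6 : σ i ∈ {l | ¬ Prime (L l)} := by rw [hE]; exact ⟨i, rfl⟩
  exact h6 (h3.prime (Y'.prime _))

theorem case_small [IsAlgClosed K] (P : Pencil 𝒜 g L)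
    (hunmixed : ∀ g : Fin d → ℤ, 𝒜 g ≠ ⊥ → 𝒜 (-g) ≠ ⊥ → g = 0)
    (hB0 : ∀ b ∈ 𝒜 (0 : Fin d → ℤ), ∃ c : K, b = algebraMap K B c)
    (σ : Fin (1 + 1) → Option K) (hσ : Function.Injective σ) (hE : {l | ¬ Prime (L l)} ⊆ Set.range σ) :
    ∃ Δ : TrinomialData K, Δ.Reduced ∧ ∃ m : ℕ,
      Nonempty (B ≃ₐ[K] MvPolynomial (Fin m) Δ.Ring) := by
  classical
  obtain ⟨m, n, t, Y⟩ := exists_sys P σ hσ hE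
  have hnp := Y.n_pos P hunmixed hB0
  obtain ⟨e⟩ := Y.iso P le_rfl hunmixed hB0 (W := MvPolynomial (Fin m ⊕ Σ i, Fin (n i)) K) X
    MvPolynomial.adjoin_range_X (fun i hi => by have := i.2; omega) (aeval t) (fun v => aeval_X _ _)
  obtain ⟨m', ⟨e'⟩⟩ := triv_iso (K := K) (Fin m ⊕ Σ i, Fin (n i)) (by
    simp only [Fintype.card_sum, Fintype.card_fin, Fintype.card_sigma]
    have : ∑ i : Fin (1 + 1), 1 ≤ ∑ i, n i := Finset.sum_le_sum fun i _ => hnp i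
    simp only [Finset.sum_const, Finset.card_univ, Fintype.card_fin, smul_eq_mul] at this
    omega)
  exact ⟨triv K, Or.inl ⟨rfl, rfl, rfl⟩, m', ⟨e.trans e'⟩⟩

theorem final_case [IsAlgClosed K] (P : Pencil 𝒜 g L)
    (hunmixed : ∀ g : Fin d → ℤ, 𝒜 g ≠ ⊥ → 𝒜 (-g) ≠ ⊥ → g = 0)
    (hB0 : ∀ b ∈ 𝒜 (0 : Fin d → ℤ), ∃ c : K, b = algebraMap K B c) :
    ∃ Δ : TrinomialData K, Δ.Reduced ∧ ∃ m : ℕ,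
      Nonempty (B ≃ₐ[K] MvPolynomial (Fin m) Δ.Ring) := by
  classical
  have hfin := P.finite_nonprime hunmixed hB0
  have henum : ∀ (T : Finset (Option K)) (r : ℕ), T.card = r + 1 →
      ∃ σ : Fin (r + 1) → Option K, Function.Injective σ ∧ Set.range σ = T := by
    intro T r h
    let e := (T.equivFinOfCardEq h).symm
    refine ⟨fun i => e i, fun i j hij => e.injective (Subtype.ext hij), ?_⟩
    ext l
    constructor
    · rintro ⟨i, rfl⟩; exact (e i).2
    · intro hl; exact ⟨e.symm ⟨l, hl⟩, by simp⟩
  by_cases hcard : 3 ≤ hfin.toFinset.card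
  · obtain ⟨σ, hσ, hr⟩ := henum hfin.toFinset (hfin.toFinset.card - 1) (by omega)
    refine case_big P (by omega) hunmixed hB0 σ hσ ?_
    rw [hr, hfin.coe_toFinset]
  · haveI : Infinite K := IsAlgClosed.instInfinite
    obtain ⟨T, hT, hTc⟩ := Infinite.exists_superset_card_eq hfin.toFinset 2 (by omega)
    obtain ⟨σ, hσ, hr⟩ := henum T 1 hTc
    refine case_small P hunmixed hB0 σ hσ ?_
    rw [hr, ← hfin.coe_toFinset]
    exact_mod_cast hT

end FinalPart


theorem main_helper {K : Type*} [Field K] [IsAlgClosed K]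
    (B : Type*) [CommRing B] [IsDomain B] [Algebra K B] [UniqueFactorizationMonoid B]
    (d : ℕ) (x : Fin (d + 1) → B) (hx : IsTranscendenceBasis K x)
    (hunir : ∃ (s : ℕ) (φ : FractionRing B →+* FractionRing (MvPolynomial (Fin s) K)),
      ∀ c : K, φ (algebraMap B (FractionRing B) (algebraMap K B c)) =
        algebraMap (MvPolynomial (Fin s) K) (FractionRing (MvPolynomial (Fin s) K)) (C c))
    (𝒜 : (Fin d → ℤ) → Submodule K B) [GradedAlgebra 𝒜]
    (heff : AddSubgroup.closure {g : Fin d → ℤ | 𝒜 g ≠ ⊥} = ⊤)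
    (hunmixed : ∀ g : Fin d → ℤ, 𝒜 g ≠ ⊥ → 𝒜 (-g) ≠ ⊥ → g = 0)
    (hB0 : ∀ b ∈ 𝒜 (0 : Fin d → ℤ), ∃ c : K, b = algebraMap K B c) :
    ∃ Δ : TrinomialData K, Δ.Reduced ∧ ∃ m : ℕ,
      Nonempty (B ≃ₐ[K] MvPolynomial (Fin m) Δ.Ring) := by
  obtain ⟨g, L, P⟩ := exists_pencil 𝒜 x hx hunir heff hB0
  exact final_case P hunmixed hB0


/-- Over an algebraically closed field `k`, a unirational UFD `B` of finite
transcendence degree `n ≥ 1` over `k` admitting an effective unmixed `ℤ^{n-1}`-grading with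
`B₀ = k` is isomorphic to a polynomial ring in some `m` variables over `k[Δ]` for some reduced
trinomial data `Δ` over `k`. -/
theorem graded_unirational_ufd_classification
    [IsAlgClosed k]
    (B : Type*) [CommRing B] [IsDomain B] [Algebra k B] [UniqueFactorizationMonoid B]
    (n : ℕ) (hn : 1 ≤ n)
    -- `B` has transcendence degree `n` over `k`
    (x : Fin n → B) (hx : IsTranscendenceBasis k x)
    -- `B` is unirational over `k`
    (hunir : ∃ (s : ℕ) (φ : FractionRing B →+* FractionRing (MvPolynomial (Fin s) k)),
      ∀ c : k, φ (algebraMap B (FractionRing B) (algebraMap k B c)) =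
        algebraMap (MvPolynomial (Fin s) k) (FractionRing (MvPolynomial (Fin s) k)) (C c))
    -- an effective unmixed `ℤ^{n-1}`-grading with `B₀ = k`
    (𝒜 : (Fin (n - 1) → ℤ) → Submodule k B) [GradedAlgebra 𝒜]
    (heff : AddSubgroup.closure {g : Fin (n - 1) → ℤ | 𝒜 g ≠ ⊥} = ⊤)
    (hunmixed : ∀ g : Fin (n - 1) → ℤ, 𝒜 g ≠ ⊥ → 𝒜 (-g) ≠ ⊥ → g = 0)
    (hB0 : ∀ b ∈ 𝒜 (0 : Fin (n - 1) → ℤ), ∃ c : k, b = algebraMap k B c) :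
    ∃ Δ : TrinomialData k, Δ.Reduced ∧ ∃ m : ℕ,
      Nonempty (B ≃ₐ[k] MvPolynomial (Fin m) Δ.Ring) := by
  obtain ⟨d, rfl⟩ := Nat.exists_eq_add_of_le' hn
  exact main_helper B d x hx hunir 𝒜 heff hunmixed hB0
end
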